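/- arXiv:1611.01593 — 3 statements merged into one kernel-verified Lean document; each statement's English description precedes it below -/
import Mathlib

section
/- The only commutator Lipschitz functions on the whole plane are affine: Let f : ℂ → ℂ be continuous and suppose there exists C ≥ 0 such that for every complex Hilbert space H, every bounded normal operator N on H and every bounded linear operator R on H, ‖f(N)R − Rf(N)‖ ≤ C·‖NR − RN‖. Then there exist a, b ∈ ℂ such that f(z) = a·z + b for all z ∈ ℂ. -/
/-!
If `f` is commutator Lipschitz with constant `C`, then the matrices of slopes of `f` between two
disjoint finite families of points are Schur multipliers of norm at most `C`. Suppose that the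
slopes of `f` at some point had two cluster points `a ≠ b`. Interlacing points converging to it,
one gets slope matrices arbitrarily close to the matrix with entries `b` below the diagonal and `a`
elsewhere, so that this matrix would be a Schur multiplier of norm at most `C` in every size. It is
not: the Hilbert matrix `(1 / (i - j))` has norm at most `π` and the sum of its entries is `0`, but
the sum of the entries below its diagonal is of order `n log n`. Hence `f` is complex differentiable
everywhere; being Lipschitz it has a bounded derivative, which is constant by Liouville's theorem.
-/

open Filter Topology MeasureTheory Matrix
open scoped ENNReal NNReal InnerProductSpace Matrix.Norms.L2Operator

section L2OpNorm

variable {𝕜 ι κ : Type*} [RCLike 𝕜] [Fintype ι] [Fintype κ]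

theorem norm_sum_smul_of_orthonormal {F : Type*} [NormedAddCommGroup F]
    [InnerProductSpace 𝕜 F] {v : κ → F} (hv : Orthonormal 𝕜 v) (w : EuclideanSpace 𝕜 κ) :
    ‖∑ j, w j • v j‖ = ‖w‖ := by
  have h : ⟪∑ j, w j • v j, ∑ j, w j • v j⟫_𝕜 = ⟪w, w⟫_𝕜 := by
    rw [hv.inner_sum, PiLp.inner_apply]
    simp only [RCLike.inner_apply']
  rw [norm_eq_sqrt_re_inner (𝕜 := 𝕜), h, ← norm_eq_sqrt_re_inner]

theorem l2_opNorm_of_inner_le [DecidableEq κ] {E F : Type*} [NormedAddCommGroup E]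
    [InnerProductSpace 𝕜 E] [NormedAddCommGroup F] [InnerProductSpace 𝕜 F] {u : ι → E} {v : κ → F}
    (hu : Orthonormal 𝕜 u) (hv : Orthonormal 𝕜 v) (B : F →L[𝕜] E) :
    ‖of fun i j ↦ ⟪u i, B (v j)⟫_𝕜‖ ≤ ‖B‖ := by
  rw [l2_opNorm_def]
  refine ContinuousLinearMap.opNorm_le_bound _ (norm_nonneg B) fun w ↦ ?_
  let q : F := ∑ j, w j • v j
  have apply_eq (i : ι) : ((of fun i j ↦ ⟪u i, B (v j)⟫_𝕜) *ᵥ w) i = ⟪u i, B q⟫_𝕜 := by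
    simp [q, mulVec, dotProduct, map_sum, inner_sum, inner_smul_right, mul_comm]
  have bessel : ∑ i, ‖⟪u i, B q⟫_𝕜‖ ^ 2 ≤ ‖B q‖ ^ 2 := hu.sum_inner_products_le _
  rw [← norm_sum_smul_of_orthonormal hv w]
  refine le_trans (le_of_sq_le_sq ?_ (norm_nonneg (B q))) (B.le_opNorm q)
  rw [EuclideanSpace.norm_sq_eq]
  simpa [apply_eq] using! bessel

theorem l2_opNorm_le_one_of_conjTranspose_mul_self_eq_one [DecidableEq κ] {V : Matrix ι κ 𝕜}
    (hV : Vᴴ * V = 1) : ‖V‖ ≤ 1 := by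
  have h : ‖V‖ * ‖V‖ ≤ 1 := by
    rw [← l2_opNorm_conjTranspose_mul_self, hV, ← diagonal_one, l2_opNorm_diagonal]
    exact pi_norm_const_le (1 : 𝕜) |>.trans_eq norm_one
  nlinarith

theorem l2_opNorm_fromBlocks₁₂ [DecidableEq ι] [DecidableEq κ] (A : Matrix ι κ 𝕜) :
    ‖(fromBlocks 0 A 0 0 : Matrix (ι ⊕ κ) (ι ⊕ κ) 𝕜)‖ = ‖A‖ := by
  let V : Matrix (ι ⊕ κ) ι 𝕜 := fromRows 1 0
  let W : Matrix (ι ⊕ κ) κ 𝕜 := fromRows 0 1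
  have hV : Vᴴ * V = 1 := by
    simp [V, conjTranspose_fromRows_eq_fromCols_conjTranspose, fromCols_mul_fromRows]
  have hW : Wᴴ * W = 1 := by
    simp [W, conjTranspose_fromRows_eq_fromCols_conjTranspose, fromCols_mul_fromRows]
  have norm_V : ‖V‖ ≤ 1 := l2_opNorm_le_one_of_conjTranspose_mul_self_eq_one hV
  have norm_W : ‖W‖ ≤ 1 := l2_opNorm_le_one_of_conjTranspose_mul_self_eq_one hW
  have blocks_eq : fromBlocks 0 A 0 0 = V * A * Wᴴ := by
    rw [conjTranspose_fromRows_eq_fromCols_conjTranspose, fromRows_mul, fromRows_mul_fromCols]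
    simp
  have corner_eq : A = Vᴴ * (V * A * Wᴴ) * W := by
    rw [Matrix.mul_assoc V, ← Matrix.mul_assoc, hV, Matrix.one_mul, Matrix.mul_assoc, hW,
      Matrix.mul_one]
  rw [blocks_eq]
  apply le_antisymm
  · grw [l2_opNorm_mul, l2_opNorm_mul, l2_opNorm_conjTranspose, norm_V, norm_W]
    simp
  · conv_lhs => rw [corner_eq]
    grw [l2_opNorm_mul, l2_opNorm_mul, l2_opNorm_conjTranspose, norm_V, norm_W]
    simp

theorem norm_sum_sum_le_l2_opNorm [DecidableEq ι] (A : Matrix ι ι 𝕜) :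
    ‖∑ i, ∑ j, A i j‖ ≤ Fintype.card ι * ‖A‖ := by
  let e : EuclideanSpace 𝕜 ι := WithLp.toLp 2 1
  have norm_e : ‖e‖ = √(Fintype.card ι) := by simp [e, EuclideanSpace.norm_eq]
  have inner_e : ⟪e, toEuclideanCLM (𝕜 := 𝕜) A e⟫_𝕜 = ∑ i, ∑ j, A i j := by
    simp [e, PiLp.inner_apply, mulVec, dotProduct]
  calc ‖∑ i, ∑ j, A i j‖ ≤ ‖e‖ * (‖A‖ * ‖e‖) := by
        grw [← inner_e, norm_inner_le_norm, ContinuousLinearMap.le_opNorm, l2_opNorm_toEuclideanCLM]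
    _ = Fintype.card ι * ‖A‖ := by
        rw [mul_left_comm, norm_e, Real.mul_self_sqrt (Nat.cast_nonneg _), mul_comm]

end L2OpNorm

section HilbertMatrix

open AddCircle

theorem l2_opNorm_of_fourierCoeff_sub_le {T : ℝ} [Fact (0 < T)] {ι κ : Type*} [Fintype ι]
    [Fintype κ] [DecidableEq κ] {k : ι → ℤ} {l : κ → ℤ} (hk : k.Injective) (hl : l.Injective)
    (φ : Lp ℂ ∞ (haarAddCircle (T := T))) :
    ‖of fun i j ↦ fourierCoeff φ (k i - l j)‖ ≤ ‖φ‖ := by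
  let B := (ContinuousLinearMap.mul ℂ ℂ).holderL (haarAddCircle (T := T)) ∞ 2 2 φ
  have norm_B : ‖B‖ ≤ ‖φ‖ := ContinuousLinearMap.opNorm_le_bound _ (norm_nonneg φ) fun g ↦ by
    refine ((ContinuousLinearMap.mul ℂ ℂ).norm_holder_apply_apply_le (r := 2) φ g).trans_eq ?_
    rw [ContinuousLinearMap.opNorm_mul, one_mul]
  have entry (i : ι) (j : κ) : fourierCoeff φ (k i - l j)
      = ⟪fourierLp (T := T) 2 (k i), B (fourierLp 2 (l j))⟫_ℂ := by
    rw [fourierCoeff, L2.inner_def]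
    refine integral_congr_ae ?_
    filter_upwards [coeFn_fourierLp (T := T) 2 (k i), coeFn_fourierLp (T := T) 2 (l j),
      (ContinuousLinearMap.mul ℂ ℂ).coeFn_holder (r := 2) φ (fourierLp 2 (l j))] with t hi hj hB
    rw [hi, ContinuousLinearMap.holderL_apply_apply, hB, hj, RCLike.inner_apply', ← fourier_neg,
      neg_sub, sub_eq_add_neg, fourier_add, ContinuousLinearMap.mul_apply', smul_eq_mul]
    ring
  simp only [entry]
  exact (l2_opNorm_of_inner_le (orthonormal_fourier.comp k hk) (orthonormal_fourier.comp l hl)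
    B).trans norm_B

/-- The skew-symmetric Hilbert matrix with entries `1 / (i - j)`, and `0 = 0⁻¹` on the diagonal. -/
noncomputable def hilbertMatrix (n : ℕ) : Matrix (Fin n) (Fin n) ℂ :=
  of fun i j ↦ ((i : ℂ) - j)⁻¹

theorem norm_periodizedBernoulli_one_le (t : UnitAddCircle) :
    ‖periodizedBernoulli 1 t‖ ≤ 1 / 2 := by
  obtain ⟨h0, h1⟩ := (AddCircle.equivIco 1 0 t).2
  change |bernoulliFun 1 (AddCircle.equivIco 1 0 t)| ≤ 1 / 2
  rw [bernoulliFun_one, abs_le]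
  constructor <;> linarith

theorem measurable_periodizedBernoulli (k : ℕ) : Measurable (periodizedBernoulli k) :=
  (Polynomial.continuous _).measurable.comp
    (measurable_subtype_coe.comp (AddCircle.measurableEquivIco 1 0).measurable)

theorem l2_opNorm_hilbertMatrix_le (n : ℕ) : ‖hilbertMatrix n‖ ≤ Real.pi := by
  have bound : ∀ᵐ t ∂haarAddCircle, ‖((↑) ∘ periodizedBernoulli 1 : UnitAddCircle → ℂ) t‖ ≤ 1 / 2 :=
    .of_forall fun t ↦ by simpa using norm_periodizedBernoulli_one_le t
  have memLp : MemLp ((↑) ∘ periodizedBernoulli 1 : UnitAddCircle → ℂ) ∞ haarAddCircle :=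
    memLp_top_of_bound (Complex.measurable_ofReal.comp
      (measurable_periodizedBernoulli 1)).aestronglyMeasurable _ bound
  have norm_φ : ‖memLp.toLp‖ ≤ 1 / 2 := by
    simpa using! Lp.norm_le_of_ae_bound (by norm_num)
      (memLp.coeFn_toLp.symm.rw (fun _ s ↦ ‖s‖ ≤ 1 / 2) bound)
  have eq_smul : hilbertMatrix n = (-(2 * Real.pi * Complex.I)) •
      of fun i j : Fin n ↦ fourierCoeff memLp.toLp ((i : ℤ) - (j : ℤ)) := by
    ext i j
    rw [Matrix.smul_apply, of_apply, fourierCoeff_congr_ae memLp.coeFn_toLp,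
      fourierCoeff_bernoulli_eq one_ne_zero]
    simp only [hilbertMatrix, of_apply, Nat.factorial_one, Nat.cast_one, pow_one, Int.cast_sub,
      Int.cast_natCast, smul_eq_mul]
    have := Complex.two_pi_I_ne_zero
    rw [neg_div, neg_mul_neg, mul_one_div, div_mul_cancel_left₀ this]
  have injective_cast : Function.Injective fun i : Fin n ↦ (i : ℤ) :=
    Nat.cast_injective.comp Fin.val_injective
  calc ‖hilbertMatrix n‖ ≤ 2 * Real.pi * (1 / 2) := by
        grw [eq_smul, norm_smul, l2_opNorm_of_fourierCoeff_sub_le injective_cast injective_cast,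
          norm_φ]
        simp [abs_of_pos Real.pi_pos]
    _ = Real.pi := by ring

theorem sum_range_harmonic (n : ℕ) : ∑ i ∈ Finset.range n, harmonic i = n * harmonic n - n := by
  induction n with
  | zero => simp
  | succ n ih =>
    rw [Finset.sum_range_succ, ih, harmonic_succ]
    push_cast
    field_simp
    ring

theorem sum_range_inv_sub {K : Type*} [DivisionRing K] [CharZero K] (i : ℕ) :
    ∑ j ∈ Finset.range i, ((i : K) - j)⁻¹ = harmonic i := by
  rw [harmonic, ← Finset.sum_range_reflect]
  push_cast
  refine Finset.sum_congr rfl fun j hj ↦ ?_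
  have : j + 1 ≤ i := Finset.mem_range.1 hj
  rw [← Nat.cast_sub (by lia), ← Nat.cast_succ]
  congr 2
  lia

/-- The matrix with entries `b` below the diagonal and `a` elsewhere: multiplying entrywise by it is
a combination of triangular truncation and the identity. -/
def triangularMatrix {α : Type*} (n : ℕ) (a b : α) : Matrix (Fin n) (Fin n) α :=
  of fun i j ↦ if j < i then b else a

theorem sum_sum_hilbertMatrix (n : ℕ) : ∑ i, ∑ j, hilbertMatrix n i j = 0 := by
  have skew (i j : Fin n) : hilbertMatrix n i j = -hilbertMatrix n j i := by
    simp only [hilbertMatrix, of_apply, ← inv_neg, neg_sub]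
  rw [← self_eq_neg]
  calc ∑ i, ∑ j, hilbertMatrix n i j = ∑ j, ∑ i, hilbertMatrix n i j := Finset.sum_comm
    _ = -∑ j, ∑ i, hilbertMatrix n j i := by
      simp only [← Finset.sum_neg_distrib, ← skew]

theorem sum_sum_ite_lt_hilbertMatrix (n : ℕ) :
    ∑ i, ∑ j, (if j < i then hilbertMatrix n i j else 0) = n * harmonic n - n := by
  have row (i : Fin n) : ∑ j, (if j < i then hilbertMatrix n i j else 0) = harmonic i := by
    simp only [Fin.lt_def, hilbertMatrix, of_apply]
    rw [Fin.sum_univ_eq_sum_range fun j ↦ if j < (i : ℕ) then ((i : ℂ) - j)⁻¹ else 0,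
      ← Finset.sum_filter, ← sum_range_inv_sub]
    refine Finset.sum_congr ?_ fun _ _ ↦ rfl
    ext j
    simp only [Finset.mem_filter, Finset.mem_range]
    lia
  simp only [row]
  rw [Fin.sum_univ_eq_sum_range fun i ↦ (harmonic i : ℂ)]
  exact_mod_cast sum_range_harmonic n

theorem sum_sum_hilbertMatrix_hadamard_triangularMatrix (n : ℕ) (a b : ℂ) :
    ∑ i, ∑ j, (hilbertMatrix n ⊙ triangularMatrix n a b) i j
      = (b - a) * (n * harmonic n - n) := by
  have split (i j : Fin n) : (hilbertMatrix n ⊙ triangularMatrix n a b) i j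
      = a * hilbertMatrix n i j + (b - a) * (if j < i then hilbertMatrix n i j else 0) := by
    simp only [hadamard_apply, triangularMatrix, of_apply]
    split_ifs <;> ring
  simp only [split, Finset.sum_add_distrib, ← Finset.mul_sum, sum_sum_hilbertMatrix,
    sum_sum_ite_lt_hilbertMatrix, mul_zero, zero_add]

theorem tendsto_harmonic_atTop : Tendsto (fun n ↦ (harmonic n : ℝ)) atTop atTop :=
  tendsto_atTop_mono log_add_one_le_harmonic <|
    Real.tendsto_log_atTop.comp <| tendsto_natCast_atTop_atTop.comp (tendsto_add_atTop_nat 1)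

end HilbertMatrix

section Slopes

theorem exists_seq_forall_mem_of_frequently_mem {X Y : Type*} [TopologicalSpace X] [T1Space X]
    [TopologicalSpace Y] {g : X → X → Y} {z : X} {U V : Set Y} (symm : ∀ x y, g x y = g y x)
    (hg : ∀ x ≠ z, ContinuousAt (g x) z) (hU : IsOpen U) (hV : IsOpen V)
    (hzU : ∃ᶠ w in 𝓝[≠] z, g z w ∈ U) (hzV : ∃ᶠ w in 𝓝[≠] z, g z w ∈ V) :
    ∃ x y : ℕ → X, (∀ i j, x i ≠ y j) ∧ (∀ i j, i ≤ j → g (x i) (y j) ∈ U) ∧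
      ∀ i j, j < i → g (x i) (y j) ∈ V := by
  have eventually_mem {W : Set Y} (hW : IsOpen W) {x : X} (hx : x ≠ z) (hxW : g z x ∈ W) :
      ∀ᶠ w in 𝓝[≠] z, x ≠ w ∧ g x w ∈ W := by
    refine (Eventually.and ?_ ?_).filter_mono nhdsWithin_le_nhds
    · exact isOpen_ne.eventually_mem hx.symm |>.mono fun _ ↦ Ne.symm
    · exact (hg x hx).eventually_mem (hW.mem_nhds (symm z x ▸ hxW))
  have eventually_ne : ∀ᶠ w in 𝓝[≠] z, w ≠ z := eventually_mem_nhdsWithin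
  -- Choose the pairs `(x n, y n)` one after the other, each close enough to `z` to suit all earlier
  -- pairs.
  obtain ⟨p, hp, hp_lt⟩ := exists_seq_of_forall_finset_exists
    (fun p : X × X ↦ (p.1 ≠ z ∧ g z p.1 ∈ U) ∧ (p.2 ≠ z ∧ g z p.2 ∈ V) ∧
      p.1 ≠ p.2 ∧ g p.1 p.2 ∈ U)
    (fun p q ↦ (p.1 ≠ q.2 ∧ g p.1 q.2 ∈ U) ∧ (p.2 ≠ q.1 ∧ g p.2 q.1 ∈ V)) <| by
    intro s hs
    have far_fst : ∀ᶠ w in 𝓝[≠] z, ∀ p ∈ s, p.1 ≠ w ∧ g p.1 w ∈ U :=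
      (eventually_all_finset s).2 fun p hp ↦ eventually_mem hU (hs p hp).1.1 (hs p hp).1.2
    have far_snd : ∀ᶠ w in 𝓝[≠] z, ∀ p ∈ s, p.2 ≠ w ∧ g p.2 w ∈ V :=
      (eventually_all_finset s).2 fun p hp ↦ eventually_mem hV (hs p hp).2.1.1 (hs p hp).2.1.2
    obtain ⟨x, hxU, hxz, hx⟩ := (hzU.and_eventually (eventually_ne.and far_snd)).exists
    obtain ⟨y, hyV, hyz, hy, hxy⟩ :=
      (hzV.and_eventually (eventually_ne.and (far_fst.and (eventually_mem hU hxz hxU)))).exists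
    exact ⟨(x, y), ⟨⟨hxz, hxU⟩, ⟨hyz, hyV⟩, hxy⟩, fun p hp ↦ ⟨hy p hp, hx p hp⟩⟩
  refine ⟨fun n ↦ (p n).1, fun n ↦ (p n).2, fun i j ↦ ?_, fun i j hij ↦ ?_, fun i j hji ↦ ?_⟩
  · rcases lt_trichotomy i j with h | rfl | h
    exacts [(hp_lt i j h).1.1, (hp i).2.2.1, (hp_lt j i h).2.1.symm]
  · rcases hij.lt_or_eq with h | rfl
    exacts [(hp_lt i j h).1.2, (hp i).2.2.2]
  · exact symm _ _ ▸ (hp_lt j i hji).2.2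

variable {𝕜 F : Type*} [NontriviallyNormedField 𝕜] [NormedAddCommGroup F] [NormedSpace 𝕜 F]

theorem triangularMatrix_mem_closure_slope {f : 𝕜 → F} {z : 𝕜} (hf : ContinuousAt f z) {a b : F}
    (ha : MapClusterPt a (𝓝[≠] z) (slope f z)) (hb : MapClusterPt b (𝓝[≠] z) (slope f z)) (n : ℕ) :
    triangularMatrix n a b ∈ closure {D | ∃ x y : Fin n → 𝕜, (∀ i j, x i ≠ y j) ∧
      D = of fun i j ↦ slope f (x i) (y j)} := by
  have continuousAt_slope (x : 𝕜) (hx : x ≠ z) : ContinuousAt (slope f x) z :=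
    ((continuousAt_id.sub continuousAt_const).inv₀ (sub_ne_zero.2 hx.symm)).smul
      (hf.sub continuousAt_const)
  refine (@Metric.mem_closure_iff (Fin n → Fin n → F) _ _ _).2 fun ε hε ↦ ?_
  obtain ⟨x, y, hxy, hU, hV⟩ := exists_seq_forall_mem_of_frequently_mem (slope_comm f)
    continuousAt_slope Metric.isOpen_ball Metric.isOpen_ball
    (ha.frequently (Metric.ball_mem_nhds a hε)) (hb.frequently (Metric.ball_mem_nhds b hε))
  refine ⟨fun i j ↦ slope f (x i) (y j), ⟨fun i ↦ x i, fun j ↦ y j, fun i j ↦ hxy i j, rfl⟩, ?_⟩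
  refine (dist_pi_lt_iff hε).2 fun i ↦ (dist_pi_lt_iff hε).2 fun j ↦ ?_
  rw [dist_comm]
  by_cases h : j < i
  · simpa [triangularMatrix, h] using! hV i j h
  · simpa [triangularMatrix, h] using! hU i j (not_lt.1 h)

theorem lipschitzWith_iff_norm_slope_le {f : 𝕜 → F} {K : ℝ≥0} :
    LipschitzWith K f ↔ ∀ z w, ‖slope f z w‖ ≤ K := by
  refine lipschitzWith_iff_dist_le_mul.trans (forall₂_congr fun z w ↦ ?_)
  rcases eq_or_ne z w with rfl | hzw
  · simp
  · rw [slope, norm_smul, norm_inv, vsub_eq_sub, ← dist_eq_norm, ← dist_eq_norm,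
      dist_comm w z, dist_comm (f w), inv_mul_le_iff₀ (dist_pos.2 hzw), mul_comm]

theorem differentiableAt_of_mapClusterPt_slope_unique [ProperSpace F] {f : 𝕜 → F} {K : ℝ≥0}
    (hf : LipschitzWith K f) {z : 𝕜}
    (h : ∀ a b, MapClusterPt a (𝓝[≠] z) (slope f z) → MapClusterPt b (𝓝[≠] z) (slope f z) → a = b) :
    DifferentiableAt 𝕜 f z := by
  have slope_mem (w : 𝕜) : slope f z w ∈ Metric.closedBall (0 : F) K :=
    mem_closedBall_zero_iff.2 (lipschitzWith_iff_norm_slope_le.1 hf z w)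
  have compact : IsCompact (Metric.closedBall (0 : F) K) := isCompact_closedBall _ _
  obtain ⟨a, -, ha⟩ := compact.exists_mapClusterPt (f := 𝓝[≠] z) (u := slope f z)
    (tendsto_principal.2 (.of_forall slope_mem))
  refine HasDerivAt.differentiableAt (hasDerivAt_iff_tendsto_slope.2 ?_) (f' := a)
  exact compact.tendsto_nhds_of_unique_mapClusterPt (.of_forall slope_mem) fun b _ hb ↦ h b a hb ha

theorem exists_eq_smul_add_of_differentiable_of_lipschitzWith {E : Type*} [NormedAddCommGroup E]
    [NormedSpace ℂ E] [CompleteSpace E] {f : ℂ → E} {K : ℝ≥0} (hd : Differentiable ℂ f)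
    (hf : LipschitzWith K f) : ∃ a b : E, ∀ z, f z = z • a + b := by
  have bounded : Bornology.IsBounded (Set.range (deriv f)) :=
    isBounded_iff_forall_norm_le.2 ⟨K, by rintro _ ⟨z, rfl⟩; exact norm_deriv_le_of_lipschitz hf⟩
  obtain ⟨a, ha⟩ := hd.deriv.exists_const_forall_eq_of_bounded bounded
  have hasDerivAt (z : ℂ) : HasDerivAt (fun z ↦ f z - z • a) 0 z := by
    simpa [ha z] using! (hd z).hasDerivAt.sub ((hasDerivAt_id z).smul_const a)
  refine ⟨a, f 0, fun z ↦ ?_⟩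
  have const := is_const_of_deriv_eq_zero (fun z ↦ (hasDerivAt z).differentiableAt)
    (fun z ↦ (hasDerivAt z).deriv) z 0
  simpa [sub_eq_iff_eq_add'] using const

end Slopes

section DiagonalCLM

variable {𝕜 ι : Type*} [RCLike 𝕜] [Fintype ι] [DecidableEq ι]

variable (𝕜 ι) in
/-- The inclusion of the diagonal matrices in the operators on Euclidean space, as a morphism of
star algebras; it transports the functional calculus. -/
noncomputable def diagonalCLM : (ι → 𝕜) →⋆ₐ[𝕜] (EuclideanSpace 𝕜 ι →L[𝕜] EuclideanSpace 𝕜 ι) where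
  toAlgHom := (toEuclideanCLM (n := ι) (𝕜 := 𝕜)).toAlgEquiv.toAlgHom.comp (diagonalAlgHom 𝕜)
  map_star' d := by
    change toEuclideanCLM (n := ι) (𝕜 := 𝕜) (diagonal (star d)) =
      star (toEuclideanCLM (n := ι) (𝕜 := 𝕜) (diagonal d))
    rw [← diagonal_conjTranspose, ← star_eq_conjTranspose, map_star]

theorem diagonalCLM_apply (d : ι → 𝕜) :
    diagonalCLM 𝕜 ι d = toEuclideanCLM (n := ι) (𝕜 := 𝕜) (diagonal d) :=
  rfl

theorem cfc_diagonalCLM (f : ℂ → ℂ) (d : ι → ℂ) :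
    cfc f (diagonalCLM ℂ ι d) = diagonalCLM ℂ ι (f ∘ d) := by
  have isStarNormal (a : ℂ) : IsStarNormal a := ⟨mul_comm _ _⟩
  have isStarNormal_d : IsStarNormal d := ⟨mul_comm _ _⟩
  have continuousOn_spectrum : ContinuousOn f (⋃ i, spectrum ℂ (d i)) := by
    have spectrum_eq (a : ℂ) : spectrum ℂ a = {a} := spectrum.scalar_eq a
    simp only [spectrum_eq]
    exact (Set.finite_iUnion fun i ↦ Set.finite_singleton (d i)).continuousOn f
  rw [← (diagonalCLM ℂ ι).map_cfc f d (by rwa [Pi.spectrum_eq])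
    (diagonalCLM ℂ ι).toAlgHom.toLinearMap.continuous_of_finiteDimensional
    isStarNormal_d (isStarNormal_d.map _),
    cfc_map_pi (S := ℂ) f d continuousOn_spectrum isStarNormal_d fun i ↦ isStarNormal (d i)]
  congr 1 with i
  exact cfc_algebraMap (A := ℂ) (d i) f

end DiagonalCLM

/-- `f` is commutator Lipschitz with constant `C` on finite-dimensional Hilbert spaces. As the
spectra are finite, `cfc f N` is the functional calculus even if `f` is not continuous. -/
def FiniteCommutatorLipschitzWith (C : ℝ≥0) (f : ℂ → ℂ) : Prop :=
  ∀ (ι : Type) [Fintype ι] (N R : EuclideanSpace ℂ ι →L[ℂ] EuclideanSpace ℂ ι), IsStarNormal N →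
    ‖cfc f N * R - R * cfc f N‖ ≤ C * ‖N * R - R * N‖

namespace FiniteCommutatorLipschitzWith

variable {f : ℂ → ℂ} {C : ℝ≥0}

theorem l2_opNorm_diagonal_commutator_le (hf : FiniteCommutatorLipschitzWith C f) {ι : Type}
    [Fintype ι] [DecidableEq ι] (d : ι → ℂ) (R : Matrix ι ι ℂ) :
    ‖diagonal (f ∘ d) * R - R * diagonal (f ∘ d)‖ ≤ C * ‖diagonal d * R - R * diagonal d‖ := by
  have isStarNormal_d : IsStarNormal d := ⟨mul_comm _ _⟩
  have h := hf ι (diagonalCLM ℂ ι d) (toEuclideanCLM (n := ι) (𝕜 := ℂ) R)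
    (isStarNormal_d.map _)
  rw [cfc_diagonalCLM] at h
  simpa only [diagonalCLM_apply, ← map_mul, ← map_sub, l2_opNorm_toEuclideanCLM] using h

theorem l2_opNorm_hadamard_slope_le (hf : FiniteCommutatorLipschitzWith C f) {ι κ : Type}
    [Fintype ι] [Fintype κ] [DecidableEq κ] {x : ι → ℂ} {y : κ → ℂ}
    (hxy : ∀ i j, x i ≠ y j) (A : Matrix ι κ ℂ) :
    ‖A ⊙ of fun i j ↦ slope f (x i) (y j)‖ ≤ C * ‖A‖ := by
  classical
  let R : Matrix (ι ⊕ κ) (ι ⊕ κ) ℂ := fromBlocks 0 (of fun i j ↦ A i j / (x i - y j)) 0 0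
  have commutator_eq (g : ℂ → ℂ) :
      diagonal (g ∘ Sum.elim x y) * R - R * diagonal (g ∘ Sum.elim x y)
        = fromBlocks 0 (A ⊙ of fun i j ↦ slope g (x i) (y j)) 0 0 := by
    have corner (i j) : g (x i) * (A i j / (x i - y j)) - A i j / (x i - y j) * g (y j)
        = A i j * slope g (x i) (y j) := by
      rw [slope_comm, slope_def_field]
      ring
    ext (i | i) (j | j) <;> simp [R, corner]
  have hadamard_slope_id : (A ⊙ of fun i j ↦ slope id (x i) (y j)) = A := by
    ext i j
    simp [slope, inv_mul_cancel₀ (sub_ne_zero.2 (hxy i j).symm)]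
  have h := hf.l2_opNorm_diagonal_commutator_le (Sum.elim x y) R
  rwa [commutator_eq f, ← Function.id_comp (Sum.elim x y), commutator_eq id, hadamard_slope_id,
    l2_opNorm_fromBlocks₁₂, l2_opNorm_fromBlocks₁₂] at h

theorem lipschitzWith (hf : FiniteCommutatorLipschitzWith C f) : LipschitzWith C f := by
  refine lipschitzWith_iff_norm_slope_le.2 fun z w ↦ ?_
  rcases eq_or_ne z w with rfl | hzw
  · simp
  · have diag_eq : (of fun _ _ : Unit ↦ slope f z w).diag = fun _ ↦ slope f z w := rfl
    simpa [one_hadamard, diag_eq] using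
      hf.l2_opNorm_hadamard_slope_le (x := fun _ : Unit ↦ z) (y := fun _ : Unit ↦ w)
        (fun _ _ ↦ hzw) 1

theorem l2_opNorm_hadamard_triangularMatrix_le (hf : FiniteCommutatorLipschitzWith C f) {z a b : ℂ}
    (ha : MapClusterPt a (𝓝[≠] z) (slope f z)) (hb : MapClusterPt b (𝓝[≠] z) (slope f z)) {n : ℕ}
    (A : Matrix (Fin n) (Fin n) ℂ) : ‖A ⊙ triangularMatrix n a b‖ ≤ C * ‖A‖ := by
  have isClosed_multipliers : IsClosed {D | ‖A ⊙ D‖ ≤ C * ‖A‖} :=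
    isClosed_le (continuous_matrix fun i j ↦
      continuous_const.mul (continuous_id.matrix_elem i j)).norm continuous_const
  refine closure_minimal ?_ isClosed_multipliers
    (triangularMatrix_mem_closure_slope hf.lipschitzWith.continuous.continuousAt ha hb n)
  rintro _ ⟨x, y, hxy, rfl⟩
  exact hf.l2_opNorm_hadamard_slope_le hxy A

theorem norm_sub_mul_harmonic_sub_one_le (hf : FiniteCommutatorLipschitzWith C f) {z a b : ℂ}
    (ha : MapClusterPt a (𝓝[≠] z) (slope f z)) (hb : MapClusterPt b (𝓝[≠] z) (slope f z)) {n : ℕ}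
    (hn : 0 < n) : ‖b - a‖ * (harmonic n - 1) ≤ C * Real.pi := by
  refine le_of_mul_le_mul_left ?_ (Nat.cast_pos.2 hn : (0 : ℝ) < n)
  calc n * (‖b - a‖ * (harmonic n - 1)) = ‖b - a‖ * (n * (harmonic n - 1)) := by ring
    _ ≤ ‖b - a‖ * ‖(n * harmonic n - n : ℂ)‖ := by
        gcongr
        refine (le_of_eq ?_).trans (Complex.re_le_norm _)
        simp [mul_sub]
    _ = ‖∑ i, ∑ j, (hilbertMatrix n ⊙ triangularMatrix n a b) i j‖ := by
        rw [sum_sum_hilbertMatrix_hadamard_triangularMatrix, norm_mul]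
    _ ≤ n * ‖hilbertMatrix n ⊙ triangularMatrix n a b‖ := by
        simpa using norm_sum_sum_le_l2_opNorm (hilbertMatrix n ⊙ triangularMatrix n a b)
    _ ≤ n * (C * Real.pi) := by
        grw [hf.l2_opNorm_hadamard_triangularMatrix_le ha hb, l2_opNorm_hilbertMatrix_le]

theorem mapClusterPt_slope_unique (hf : FiniteCommutatorLipschitzWith C f) {z a b : ℂ}
    (ha : MapClusterPt a (𝓝[≠] z) (slope f z)) (hb : MapClusterPt b (𝓝[≠] z) (slope f z)) :
    a = b := by
  by_contra hab
  have norm_pos : 0 < ‖b - a‖ := norm_sub_pos_iff.2 (Ne.symm hab)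
  have tendsto_atTop : Tendsto (fun n ↦ ‖b - a‖ * ((harmonic n : ℝ) - 1)) atTop atTop :=
    (tendsto_atTop_add_const_right _ (-1) tendsto_harmonic_atTop).const_mul_atTop norm_pos
  obtain ⟨n, hlt, hn⟩ :=
    ((tendsto_atTop.eventually_gt_atTop (C * Real.pi)).and (eventually_gt_atTop 0)).exists
  exact hlt.not_ge (hf.norm_sub_mul_harmonic_sub_one_le ha hb hn)

end FiniteCommutatorLipschitzWith

theorem stmt_17_general {f : ℂ → ℂ} {C : ℝ≥0} (hf : FiniteCommutatorLipschitzWith C f) :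
    ∃ a b : ℂ, ∀ z : ℂ, f z = a * z + b := by
  have differentiable : Differentiable ℂ f := fun _ ↦
    differentiableAt_of_mapClusterPt_slope_unique hf.lipschitzWith fun _ _ ha hb ↦
      hf.mapClusterPt_slope_unique ha hb
  obtain ⟨a, b, hab⟩ :=
    exists_eq_smul_add_of_differentiable_of_lipschitzWith differentiable hf.lipschitzWith
  exact ⟨a, b, fun z ↦ by rw [hab, smul_eq_mul, mul_comm]⟩

/-- The only commutator Lipschitz functions on the whole plane are affine: if
`f : ℂ → ℂ` is continuous and there is `C ≥ 0` such that
`‖f(N)R - Rf(N)‖ ≤ C * ‖NR - RN‖` for every bounded normal operator `N` and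
every bounded operator `R` on any complex Hilbert space, then `f(z) = a z + b`
for some `a, b ∈ ℂ`. -/
theorem stmt_17 (f : ℂ → ℂ) (hf : Continuous f) (C : ℝ) (hC : 0 ≤ C)
    (hyp : ∀ (H : Type) [NormedAddCommGroup H] [InnerProductSpace ℂ H] [CompleteSpace H]
      (N R : H →L[ℂ] H), IsStarNormal N →
      ‖cfc f N * R - R * cfc f N‖ ≤ C * ‖N * R - R * N‖) :
    ∃ a b : ℂ, ∀ z : ℂ, f z = a * z + b :=
  stmt_17_general (C := ⟨C, hC⟩) fun _ _ N R hN ↦ hyp _ N R hN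
end

section
/- If every Lipschitz function on a closed set F ⊆ ℂ were operator Lipschitz on F, then F is finite. Equivalently: if F is a closed infinite subset of ℂ, then there exist a function f : ℂ → ℂ and L ≥ 0 such that f is Lipschitz on F with constant L, yet f is not operator Lipschitz on F: for every C ≥ 0 there exist bounded normal operators N₁ and N₂ on the Hilbert space ℓ²(ℕ, ℂ) with spectra contained in F such that ‖f(N₁) − f(N₂)‖ > C·‖N₁ − N₂‖. -/
/-!
Suppose `f` is operator Lipschitz on `F`. Differentiating `t ↦ exp (itR) N exp (-itR)` at `0`, for
`R` self-adjoint and `N` normal with spectrum in `F`, turns the operator Lipschitz estimate into the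
commutator estimate `‖[R, f(N)]‖ ≤ C ‖[R, N]‖`. For diagonal matrices `N` this says that Schur
multiplication by the divided differences of `f` on `F` is bounded, up to the phase factor
`conj (z - w) / (z - w)` which enters because `N` need not be self-adjoint.

Inside the infinite set `F` choose a sequence whose distances to a point `c` tend very fast to `0`
or to `∞`, and whose phases as seen from `c` converge. Let `f(z) - f(c) = z - c` on every other term
and `0` on the remaining ones: this is Lipschitz. Far along the sequence, of any two terms one
dominates, so the phase factor becomes constant while the divided differences become `0` or `1`
according to which term dominates, that is, a triangular pattern. Triangular truncation of matrices
would then be bounded uniformly in the size, and it is not.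
-/

open Filter Matrix
open scoped CStarAlgebra ComplexStarModule Matrix.Norms.L2Operator NNReal Topology

section OperatorLipschitz

lemma norm_le_mul_norm_of_hasDerivAt {E E' : Type*} [NormedAddCommGroup E] [NormedSpace ℝ E]
    [NormedAddCommGroup E'] [NormedSpace ℝ E'] {g : ℝ → E} {h : ℝ → E'} {g' : E} {h' : E'} {t C : ℝ}
    (hg : HasDerivAt g g' t) (hh : HasDerivAt h h' t)
    (hgh : ∀ s, ‖g s - g t‖ ≤ C * ‖h s - h t‖) : ‖g'‖ ≤ C * ‖h'‖ := by
  rw [hasDerivAt_iff_tendsto_slope] at hg hh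
  refine le_of_tendsto_of_tendsto' hg.norm (hh.norm.const_mul C) fun s => ?_
  rw [slope_def_module, slope_def_module, norm_smul, norm_smul, mul_left_comm]
  gcongr
  exact hgh s

/-- `f` is operator Lipschitz on `F` with constant `C`, as seen by the normal elements of the
C⋆-algebra `A`; the usual notion is the case where `A` is the algebra of bounded operators on a
Hilbert space. -/
def OperatorLipschitzOnWith (A : Type*) [CStarAlgebra A] (C : ℝ≥0) (f : ℂ → ℂ)
    (F : Set ℂ) : Prop :=
  LipschitzOnWith C (cfc f : A → A) {N | IsStarNormal N ∧ spectrum ℂ N ⊆ F}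

variable {A B : Type*} [CStarAlgebra A] [CStarAlgebra B] {C : ℝ≥0} {f : ℂ → ℂ} {F : Set ℂ}

lemma not_operatorLipschitzOnWith_iff :
    ¬ OperatorLipschitzOnWith A C f F ↔ ∃ N₁ N₂ : A,
      IsStarNormal N₁ ∧ IsStarNormal N₂ ∧ spectrum ℂ N₁ ⊆ F ∧ spectrum ℂ N₂ ⊆ F ∧
        C * ‖N₁ - N₂‖ < ‖cfc f N₁ - cfc f N₂‖ := by
  simp only [OperatorLipschitzOnWith, lipschitzOnWith_iff_norm_sub_le, Set.mem_ofPred_eq,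
    not_forall, not_le]
  grind

attribute [local instance] LieRing.ofAssociativeRing

lemma hasDerivAt_expUnitary_conj (R : selfAdjoint A) (M : A) :
    HasDerivAt (fun t : ℝ => Unitary.conjStarAlgAut ℂ A (selfAdjoint.expUnitary (t • R)) M)
      (Complex.I • ⁅(R : A), M⁆) 0 := by
  have hexp (B : A) : HasDerivAt (fun t : ℝ => NormedSpace.exp (t • B)) B 0 := by
    simpa using hasDerivAt_exp_smul_const (𝕂 := ℝ) B 0
  have hconj (t : ℝ) : Unitary.conjStarAlgAut ℂ A (selfAdjoint.expUnitary (t • R)) M =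
      NormedSpace.exp (t • Complex.I • (R : A)) * M *
        NormedSpace.exp (t • -(Complex.I • (R : A))) := by
    rw [Unitary.conjStarAlgAut_apply, selfAdjoint.expUnitary_coe, NormedSpace.star_exp]
    simp [smul_comm t]
  simp only [hconj]
  refine (((hexp (Complex.I • (R : A))).mul_const M).mul
    (hexp (-(Complex.I • (R : A))))).congr_deriv ?_
  simp [Ring.lie_def, sub_eq_add_neg]

lemma OperatorLipschitzOnWith.norm_commutator_le_of_isSelfAdjoint
    (h : OperatorLipschitzOnWith A C f F) (hf : ContinuousOn f F) {N R : A} [IsStarNormal N]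
    (hN : spectrum ℂ N ⊆ F) (hR : IsSelfAdjoint R) : ‖⁅R, cfc f N⁆‖ ≤ C * ‖⁅R, N⁆‖ := by
  have hderiv := hasDerivAt_expUnitary_conj ⟨R, hR⟩
  have hbound := norm_le_mul_norm_of_hasDerivAt (C := C) (hderiv (cfc f N)) (hderiv N) fun t => ?_
  · simpa [norm_smul] using hbound
  set φ := Unitary.conjStarAlgAut ℂ A (selfAdjoint.expUnitary (t • ⟨R, hR⟩))
  have hφN : IsStarNormal (φ N) := ‹IsStarNormal N›.map φ
  rw [StarAlgHomClass.map_cfc φ f N (hf.mono hN) (StarAlgEquiv.isometry φ).continuous]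
  simpa using h.norm_sub_le ⟨hφN, by rwa [AlgEquiv.spectrum_eq φ N]⟩ ⟨‹_›, hN⟩

lemma norm_lie_star_left {R : Type*} [NormedRing R] [StarRing R] [NormedStarGroup R] (x y : R) :
    ‖⁅star x, y⁆‖ = ‖⁅x, star y⁆‖ := by
  rw [← norm_neg, ← norm_star]
  simp [Ring.lie_def]

lemma OperatorLipschitzOnWith.norm_commutator_le
    (h : OperatorLipschitzOnWith A C f F) (hf : ContinuousOn f F) {N : A} [IsStarNormal N]
    (hN : spectrum ℂ N ⊆ F) (X : A) :
    ‖⁅X, cfc f N⁆‖ ≤ C * (‖⁅X, N⁆‖ + ‖⁅X, star N⁆‖) := by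
  have hX : ⁅X, cfc f N⁆ = ⁅(ℜ X : A), cfc f N⁆ + Complex.I • ⁅(ℑ X : A), cfc f N⁆ := by
    rw [← smul_lie, ← add_lie, realPart_add_I_smul_imaginaryPart]
  have hre : ‖⁅(ℜ X : A), N⁆‖ ≤ 2⁻¹ * (‖⁅X, N⁆‖ + ‖⁅X, star N⁆‖) := by
    rw [realPart_apply_coe, ← Complex.coe_smul, smul_lie, add_lie, norm_smul, ← norm_lie_star_left]
    rw [Complex.norm_of_nonneg (by norm_num)]
    gcongr
    exact norm_add_le _ _
  have him : ‖⁅(ℑ X : A), N⁆‖ ≤ 2⁻¹ * (‖⁅X, N⁆‖ + ‖⁅X, star N⁆‖) := by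
    rw [imaginaryPart_apply_coe, ← Complex.coe_smul, smul_lie, smul_lie, sub_lie, norm_smul,
      norm_smul, ← norm_lie_star_left]
    rw [norm_neg, Complex.norm_I, one_mul, Complex.norm_of_nonneg (by norm_num)]
    gcongr
    exact norm_sub_le _ _
  calc ‖⁅X, cfc f N⁆‖
      ≤ ‖⁅(ℜ X : A), cfc f N⁆‖ + ‖⁅(ℑ X : A), cfc f N⁆‖ := by
        rw [hX]; exact (norm_add_le _ _).trans_eq (by simp [norm_smul])
    _ ≤ C * ‖⁅(ℜ X : A), N⁆‖ + C * ‖⁅(ℑ X : A), N⁆‖ :=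
        add_le_add (h.norm_commutator_le_of_isSelfAdjoint hf hN (ℜ X).2)
          (h.norm_commutator_le_of_isSelfAdjoint hf hN (ℑ X).2)
    _ ≤ C * (2⁻¹ * (‖⁅X, N⁆‖ + ‖⁅X, star N⁆‖)) + C * (2⁻¹ * (‖⁅X, N⁆‖ + ‖⁅X, star N⁆‖)) := by
        gcongr
    _ = C * (‖⁅X, N⁆‖ + ‖⁅X, star N⁆‖) := by ring

lemma cfc_complex (f : ℂ → ℂ) (z : ℂ) : cfc f z = f z := cfc_algebraMap z f

lemma spectrum_complex (z : ℂ) : spectrum ℂ z = {z} := spectrum.scalar_eq z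

/-- The extension of a possibly non-unital homomorphism `φ : A → B` to a unital homomorphism on
`A × ℂ`, the factor `ℂ` acting by scalars on the complement of the projection `φ 1`. It transports
functional calculi along corner embeddings. -/
noncomputable def unitalExtension (φ : A →⋆ₙₐ[ℂ] B) : A × ℂ →⋆ₐ[ℂ] B where
  toFun x := φ x.1 + x.2 • (1 - φ 1)
  map_one' := by simp
  map_mul' x y := by
    have hright : φ x.1 * φ 1 = φ x.1 := by rw [← map_mul, mul_one]
    have hleft : φ 1 * φ y.1 = φ y.1 := by rw [← map_mul, one_mul]
    have hproj : φ 1 * φ 1 = φ 1 := by rw [← map_mul, one_mul]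
    simp [mul_add, add_mul, mul_sub, sub_mul, hright, hleft, hproj, smul_smul, mul_comm]
  map_zero' := by simp
  map_add' x y := by
    simp only [Prod.fst_add, Prod.snd_add, map_add, add_smul]
    abel
  commutes' z := by simp [Algebra.algebraMap_eq_smul_one, ← smul_add]
  map_star' x := by simp [← map_star]

lemma unitalExtension_apply (φ : A →⋆ₙₐ[ℂ] B) (a : A) (z : ℂ) :
    unitalExtension φ (a, z) = φ a + z • (1 - φ 1) := rfl

lemma OperatorLipschitzOnWith.of_injective (h : OperatorLipschitzOnWith B C f F)
    (hf : ContinuousOn f F) (hF : F.Nonempty) {φ : A →⋆ₙₐ[ℂ] B} (hφ : Function.Injective φ) :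
    OperatorLipschitzOnWith A C f F := by
  obtain ⟨z, hz⟩ := hF
  have hmem {N : A} (hN : IsStarNormal N ∧ spectrum ℂ N ⊆ F) :
      (IsStarNormal (unitalExtension φ (N, z)) ∧ spectrum ℂ (unitalExtension φ (N, z)) ⊆ F) ∧
        unitalExtension φ (cfc f N, f z) = cfc f (unitalExtension φ (N, z)) := by
    obtain ⟨hnormal, hspec⟩ := hN
    have hnormalPair : IsStarNormal (N, z) := ⟨Prod.ext hnormal.star_comm_self (mul_comm _ _)⟩
    have hspecUnion : spectrum ℂ N ∪ spectrum ℂ z ⊆ F := by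
      rw [spectrum_complex]
      exact Set.union_subset hspec (Set.singleton_subset_iff.2 hz)
    have hspecPair : spectrum ℂ (N, z) ⊆ F := by rwa [Prod.spectrum_eq]
    refine ⟨⟨hnormalPair.map _, ?_⟩, ?_⟩
    · exact (AlgHom.spectrum_apply_subset (unitalExtension φ) _).trans hspecPair
    · rw [← StarAlgHom.map_cfc (unitalExtension φ) f (N, z) (hf.mono hspecPair) (map_continuous _),
        cfc_map_prod (S := ℂ) f N z (hf.mono hspecUnion) hnormalPair hnormal ⟨mul_comm _ _⟩,
        cfc_complex]
  refine LipschitzOnWith.of_dist_le_mul fun N hN M hM => ?_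
  have hdist := h.dist_le_mul _ (hmem hN).1 _ (hmem hM).1
  rw [← (hmem hN).2, ← (hmem hM).2] at hdist
  simpa [dist_eq_norm, unitalExtension_apply, ← map_sub, NonUnitalStarAlgHom.norm_map φ hφ]
    using hdist

end OperatorLipschitz

section Hilbert

open ContinuousLinearMap InnerProductSpace

variable {𝕜 H K : Type*} [RCLike 𝕜] [NormedAddCommGroup H] [NormedAddCommGroup K]

lemma nonempty_linearIsometry_of_finrank_le_rank [InnerProductSpace 𝕜 H] [InnerProductSpace 𝕜 K]
    [FiniteDimensional 𝕜 K] (h : Module.finrank 𝕜 K ≤ Module.rank 𝕜 H) :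
    Nonempty (K →ₗᵢ[𝕜] H) := by
  obtain ⟨v, hv⟩ := exists_linearIndependent_of_le_rank h
  let b := stdOrthonormalBasis 𝕜 K
  refine ⟨(b.toBasis.constr 𝕜 (gramSchmidtNormed 𝕜 v)).isometryOfOrthonormal (v := b.toBasis)
    (by simp) ?_⟩
  convert gramSchmidtNormed_orthonormal hv
  ext i
  simp

lemma not_finiteDimensional_lp {ι : Type*} [Infinite ι] :
    ¬ FiniteDimensional 𝕜 (lp (fun _ : ι => 𝕜) 2) := fun _ =>
  (HilbertBasis.ofRepr (.refl 𝕜 (lp (fun _ : ι => 𝕜) 2))).orthonormal.linearIndependent.finite.false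

variable [InnerProductSpace ℂ H] [CompleteSpace H] [InnerProductSpace ℂ K] [CompleteSpace K]

/-- The homomorphism `T ↦ V T V⋆` induced by an isometry `V : K → H`, which embeds the operators on
`K` as a corner of the operators on `H`. -/
noncomputable def conjIsometry (V : K →ₗᵢ[ℂ] H) : (K →L[ℂ] K) →⋆ₙₐ[ℂ] (H →L[ℂ] H) where
  toFun T := V.toContinuousLinearMap ∘L T ∘L adjoint V.toContinuousLinearMap
  map_smul' c T := by simp
  map_zero' := by simp
  map_add' S T := by simp
  map_mul' S T := by
    ext x
    have hV (y : K) : adjoint V.toContinuousLinearMap (V y) = y := congr($(V.adjoint_comp_self) y)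
    simp [hV]
  map_star' T := by
    simp [star_eq_adjoint, adjoint_comp, comp_assoc]

lemma conjIsometry_injective (V : K →ₗᵢ[ℂ] H) : Function.Injective (conjIsometry V) := by
  intro S T hST
  have hV (y : K) : adjoint V.toContinuousLinearMap (V y) = y := congr($(V.adjoint_comp_self) y)
  ext x
  simpa [conjIsometry, hV] using congr($hST (V x))

lemma OperatorLipschitzOnWith.matrix {C : ℝ≥0} {f : ℂ → ℂ} {F : Set ℂ}
    (h : OperatorLipschitzOnWith (H →L[ℂ] H) C f F) (hf : ContinuousOn f F) (hF : F.Nonempty)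
    (hH : ¬ FiniteDimensional ℂ H) (ι : Type*) [Fintype ι] [DecidableEq ι] :
    OperatorLipschitzOnWith (Matrix ι ι ℂ) C f F := by
  obtain ⟨V⟩ : Nonempty (EuclideanSpace ℂ ι →ₗᵢ[ℂ] H) := by
    refine nonempty_linearIsometry_of_finrank_le_rank (Cardinal.natCast_le_aleph0.trans ?_)
    rwa [← not_lt, Module.rank_lt_aleph0_iff]
  let φ : Matrix ι ι ℂ →⋆ₙₐ[ℂ] EuclideanSpace ℂ ι →L[ℂ] EuclideanSpace ℂ ι :=
    (toEuclideanCLM : Matrix ι ι ℂ ≃⋆ₐ[ℂ] _)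
  have hφ : Function.Injective φ := (toEuclideanCLM (n := ι) (𝕜 := ℂ)).injective
  exact (h.of_injective hf hF (conjIsometry_injective V)).of_injective hf hF hφ

end Hilbert

section Schur

variable {l m n 𝕜 : Type*} [RCLike 𝕜] [Fintype m] [Fintype n] [DecidableEq m] [DecidableEq n]

lemma norm_mul_of_conjTranspose_mul_self_eq_one [Fintype l] {E : Matrix l m 𝕜} (hE : Eᴴ * E = 1)
    (B : Matrix m n 𝕜) : ‖E * B‖ = ‖B‖ := by
  refine (mul_self_inj (norm_nonneg _) (norm_nonneg _)).1 ?_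
  rw [← l2_opNorm_conjTranspose_mul_self, ← l2_opNorm_conjTranspose_mul_self,
    conjTranspose_mul, Matrix.mul_assoc, ← Matrix.mul_assoc Eᴴ, hE, Matrix.one_mul]

lemma norm_fromBlocks_zero_topRight (B : Matrix m n 𝕜) :
    ‖(fromBlocks 0 B 0 0 : Matrix (m ⊕ n) (m ⊕ n) 𝕜)‖ = ‖B‖ := by
  let E : Matrix (m ⊕ n) m 𝕜 := fromRows 1 0
  let E' : Matrix (m ⊕ n) n 𝕜 := fromRows 0 1
  have hE : Eᴴ * E = 1 := by
    simp [E, conjTranspose_fromRows_eq_fromCols_conjTranspose, fromCols_mul_fromRows]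
  have hE' : E'ᴴ * E' = 1 := by
    simp [E', conjTranspose_fromRows_eq_fromCols_conjTranspose, fromCols_mul_fromRows]
  have hB : (fromBlocks 0 B 0 0 : Matrix (m ⊕ n) (m ⊕ n) 𝕜) = E * (E' * Bᴴ)ᴴ := by
    rw [fromRows_mul, fromRows_mul, conjTranspose_fromRows_eq_fromCols_conjTranspose]
    ext (a | a) (b | b) <;> simp
  rw [hB, norm_mul_of_conjTranspose_mul_self_eq_one hE, l2_opNorm_conjTranspose,
    norm_mul_of_conjTranspose_mul_self_eq_one hE', l2_opNorm_conjTranspose]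

lemma lie_fromBlocks_div_diagonal {R : Type*} [Field R] (A : Matrix m n R) (p p' : m → R)
    (q q' : n → R) :
    ⁅(fromBlocks 0 (.of fun a b => -(A a b / (p a - q b))) 0 0 : Matrix (m ⊕ n) (m ⊕ n) R),
        diagonal (Sum.elim p' q')⁆ =
      fromBlocks 0 (.of (fun a b => (p' a - q' b) / (p a - q b)) ⊙ A) 0 0 := by
  have hentry (a b) : -(A a b / (p a - q b)) * q' b - p' a * -(A a b / (p a - q b)) =
      (p' a - q' b) / (p a - q b) * A a b := by ring
  ext (a | a) (b | b) <;> simp [Ring.lie_def, ← hentry]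

lemma cfc_diagonal (f : ℂ → ℂ) (d : n → ℂ) : cfc f (diagonal d) = diagonal (f ∘ d) := by
  let φ : (n → ℂ) →⋆ₐ[ℂ] Matrix n n ℂ :=
    { diagonalAlgHom ℂ with map_star' := fun d => (diagonal_conjTranspose d).symm }
  have hd : IsStarNormal d := ⟨mul_comm _ _⟩
  have hspec : (⋃ i, spectrum ℂ (d i)).Finite :=
    Set.finite_iUnion fun i => by simp only [spectrum_complex, Set.finite_singleton]
  have hmap := StarAlgHom.map_cfc φ f d (Set.Finite.continuousOn (by rwa [Pi.spectrum_eq]) f)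
    (map_continuous φ) hd (hd.map φ)
  rw [cfc_map_pi (S := ℂ) f d (hspec.continuousOn f) hd fun _ => ⟨mul_comm _ _⟩] at hmap
  simp only [cfc_complex] at hmap
  exact hmap.symm

lemma OperatorLipschitzOnWith.norm_slope_hadamard_le {C : ℝ≥0} {f : ℂ → ℂ} {F : Set ℂ}
    (h : OperatorLipschitzOnWith (Matrix (m ⊕ n) (m ⊕ n) ℂ) C f F) (hf : ContinuousOn f F)
    {p : m → ℂ} {q : n → ℂ} (hp : ∀ a, p a ∈ F) (hq : ∀ b, q b ∈ F) (hpq : ∀ a b, p a ≠ q b)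
    (A : Matrix m n ℂ) :
    ‖(Matrix.of fun a b => slope f (q b) (p a)) ⊙ A‖ ≤
      C * (‖A‖ + ‖(Matrix.of fun a b => star (p a - q b) / (p a - q b)) ⊙ A‖) := by
  set N : Matrix (m ⊕ n) (m ⊕ n) ℂ := diagonal (Sum.elim p q) with hN
  set X : Matrix (m ⊕ n) (m ⊕ n) ℂ := fromBlocks 0 (.of fun a b => -(A a b / (p a - q b))) 0 0
  have hlie : ⁅X, N⁆ = fromBlocks 0 A 0 0 := by
    rw [lie_fromBlocks_div_diagonal]
    congr 1
    ext a b
    rw [hadamard_apply, of_apply, div_self (sub_ne_zero.2 (hpq a b)), one_mul]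
  have hstar_eq : star N = diagonal (Sum.elim (star p) (star q)) := by
    rw [hN, star_eq_conjTranspose, diagonal_conjTranspose]
    exact congrArg diagonal (Sum.comp_elim star p q)
  have hstar : ⁅X, star N⁆ =
      fromBlocks 0 ((Matrix.of fun a b => star (p a - q b) / (p a - q b)) ⊙ A) 0 0 := by
    rw [hstar_eq, lie_fromBlocks_div_diagonal]
    simp only [Pi.star_apply, star_sub]
  have hcfc : ⁅X, cfc f N⁆ =
      fromBlocks 0 ((Matrix.of fun a b => slope f (q b) (p a)) ⊙ A) 0 0 := by
    rw [hN, cfc_diagonal, Sum.comp_elim, lie_fromBlocks_div_diagonal]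
    simp only [Function.comp_apply, slope_def_field]
  have hnormal : IsStarNormal N := ⟨by rw [hstar_eq]; exact commute_diagonal _ _⟩
  have hspec : spectrum ℂ N ⊆ F := by
    rw [hN, spectrum_diagonal, Set.Sum.elim_range, Set.union_subset_iff]
    exact ⟨Set.range_subset_iff.2 hp, Set.range_subset_iff.2 hq⟩
  simpa only [hlie, hstar, hcfc, norm_fromBlocks_zero_topRight] using
    h.norm_commutator_le hf hspec X

end Schur

section TriangularTruncation

/-- The upper triangular part of a matrix, diagonal included. -/
def triangularTruncation {ι R : Type*} [LE ι] [DecidableLE ι] [Zero R] (A : Matrix ι ι R) :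
    Matrix ι ι R :=
  .of fun a b => if a ≤ b then A a b else 0

lemma OperatorLipschitzOnWith.norm_triangularTruncation_le {ι : Type*} [Fintype ι] [DecidableEq ι]
    [LE ι] [DecidableLE ι] {C : ℝ≥0} {f : ℂ → ℂ} {F : Set ℂ}
    (h : OperatorLipschitzOnWith (Matrix (ι ⊕ ι) (ι ⊕ ι) ℂ) C f F) (hf : ContinuousOn f F)
    {p q : ι → ℕ → ℂ} (hp : ∀ a N, p a N ∈ F) (hq : ∀ b N, q b N ∈ F)
    (hpq : ∀ a b N, p a N ≠ q b N) {η : ℂ} (hη : ‖η‖ = 1)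
    (hslope : ∀ a b, Tendsto (fun N => slope f (q b N) (p a N)) atTop
      (𝓝 (if a ≤ b then 1 else 0)))
    (hphase : ∀ a b, Tendsto (fun N => star (p a N - q b N) / (p a N - q b N)) atTop (𝓝 η))
    (A : Matrix ι ι ℂ) : ‖triangularTruncation A‖ ≤ 2 * C * ‖A‖ := by
  have hlim {M : ℕ → ι → ι → ℂ} {B : ι → ι → ℂ}
      (hM : ∀ a b, Tendsto (fun N => M N a b) atTop (𝓝 (B a b))) :
      Tendsto (fun N => ‖Matrix.of (M N) ⊙ A‖) atTop (𝓝 ‖Matrix.of B ⊙ A‖) := by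
    have hentries : Tendsto (fun N => Matrix.of (M N) ⊙ A) atTop (𝓝 (Matrix.of B ⊙ A)) :=
      tendsto_pi_nhds.2 fun a => tendsto_pi_nhds.2 fun b => (hM a b).mul_const (A a b)
    exact hentries.norm
  have htrunc : (Matrix.of fun a b : ι => if a ≤ b then (1 : ℂ) else 0) ⊙ A =
      triangularTruncation A := by
    ext a b
    simp [triangularTruncation]
  have hconst : ‖(Matrix.of fun _ _ : ι => η) ⊙ A‖ = ‖A‖ := by
    rw [show (Matrix.of fun _ _ : ι => η) ⊙ A = η • A from rfl, norm_smul, hη, one_mul]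
  have hbound := le_of_tendsto_of_tendsto' (hlim hslope)
    (((hlim hphase).const_add ‖A‖).const_mul (C : ℝ)) fun N =>
      h.norm_slope_hadamard_le hf (hp · N) (hq · N) (hpq · · N) A
  rw [htrunc, hconst] at hbound
  linarith

/-- The Kronecker product of the matrix `!![1, ε; -ε, 1]` with `A`. It multiplies the norm by only
`√(1 + ε²)`, while the block `ε • A` lies above the diagonal and survives triangular truncation in
full. -/
noncomputable def tensorRotation {n : ℕ} (ε : ℝ) (A : Matrix (Fin n) (Fin n) ℂ) :
    Matrix (Fin (n + n)) (Fin (n + n)) ℂ :=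
  reindex finSumFinEquiv finSumFinEquiv (fromBlocks A (ε • A) (-ε • A) A)

lemma conjTranspose_mul_self_tensorRotation {n : ℕ} (ε : ℝ) (A : Matrix (Fin n) (Fin n) ℂ) :
    (tensorRotation ε A)ᴴ * tensorRotation ε A =
      reindex finSumFinEquiv finSumFinEquiv
        (fromBlocks ((1 + ε ^ 2) • (Aᴴ * A)) 0 0 ((1 + ε ^ 2) • (Aᴴ * A))) := by
  rw [tensorRotation, conjTranspose_reindex, reindex_apply, reindex_apply, submatrix_mul_equiv,
    fromBlocks_conjTranspose, fromBlocks_multiply, reindex_apply]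
  congr 2
  · simp [add_smul, smul_smul, sq]
  · simp
  · simp
  · simp [add_smul, smul_smul, sq, add_comm]

lemma sum_entries_tensorRotation {n : ℕ} (ε : ℝ) (A : Matrix (Fin n) (Fin n) ℂ) :
    ∑ a, ∑ b, tensorRotation ε A a b = 2 * ∑ a, ∑ b, A a b := by
  simp only [Fin.sum_univ_add, Finset.sum_add_distrib]
  simp only [tensorRotation, neg_smul, reindex_apply, submatrix_apply, fromBlocks_apply₁₁,
    fromBlocks_apply₁₂, fromBlocks_apply₂₁, fromBlocks_apply₂₂, finSumFinEquiv_symm_apply_castAdd,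
    finSumFinEquiv_symm_apply_natAdd, Matrix.neg_apply, Finset.sum_neg_distrib]
  ring

lemma sum_entries_triangularTruncation_tensorRotation {n : ℕ} (ε : ℝ)
    (A : Matrix (Fin n) (Fin n) ℂ) :
    ∑ a, ∑ b, triangularTruncation (tensorRotation ε A) a b =
      2 * ∑ a, ∑ b, triangularTruncation A a b + ε * ∑ a, ∑ b, A a b := by
  have hlt (a b : Fin n) : Fin.castAdd n a < Fin.natAdd n b := by
    simpa [Fin.lt_def] using by omega
  simp only [Fin.sum_univ_add, Finset.sum_add_distrib]
  simp only [triangularTruncation, tensorRotation, of_apply, reindex_apply, submatrix_apply,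
    (hlt _ _).le, (hlt _ _).not_ge, (Fin.strictMono_castAdd n).le_iff_le, Fin.natAdd_le_natAdd_iff,
    if_true, if_false, finSumFinEquiv_symm_apply_castAdd, finSumFinEquiv_symm_apply_natAdd,
    fromBlocks_apply₁₁, fromBlocks_apply₁₂, fromBlocks_apply₂₂, Matrix.smul_apply,
    Complex.real_smul, Finset.sum_const_zero, ← Finset.mul_sum]
  ring

lemma exists_sum_triangularTruncation_eq (ε : ℝ) (k : ℕ) :
    ∃ (n : ℕ) (A : Matrix (Fin n) (Fin n) ℂ), 0 < n ∧ Aᴴ * A = (1 + ε ^ 2) ^ k • 1 ∧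
      ∑ a, ∑ b, A a b = n ∧ ∑ a, ∑ b, triangularTruncation A a b = n * (1 + k * ε / 2) := by
  induction k with
  | zero => exact ⟨1, 1, by simp [triangularTruncation]⟩
  | succ k ih =>
    obtain ⟨n, A, hn, hA, hsum, htrunc⟩ := ih
    refine ⟨n + n, tensorRotation ε A, by omega, ?_, ?_, ?_⟩
    · rw [conjTranspose_mul_self_tensorRotation, hA, smul_smul, ← pow_succ']
      ext a b
      obtain ⟨a, rfl⟩ := finSumFinEquiv.surjective a
      obtain ⟨b, rfl⟩ := finSumFinEquiv.surjective b
      rcases a with a | a <;> rcases b with b | b <;>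
        simp [-finSumFinEquiv_apply_left, -finSumFinEquiv_apply_right, one_apply]
    · rw [sum_entries_tensorRotation, hsum]
      push_cast
      ring
    · rw [sum_entries_triangularTruncation_tensorRotation, hsum, htrunc]
      push_cast
      ring

lemma norm_sum_entries_le {𝕜 m n : Type*} [RCLike 𝕜] [Fintype m] [Fintype n] [DecidableEq n]
    (A : Matrix m n 𝕜) : ‖∑ a, ∑ b, A a b‖ ≤ √(Fintype.card m) * ‖A‖ * √(Fintype.card n) := by
  have hsum : ∑ a, ∑ b, A a b =
      inner 𝕜 (WithLp.toLp 2 (1 : m → 𝕜)) (WithLp.toLp 2 (A *ᵥ 1)) := by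
    simp [EuclideanSpace.inner_eq_star_dotProduct, mulVec, dotProduct]
  calc ‖∑ a, ∑ b, A a b‖
      ≤ ‖WithLp.toLp 2 (1 : m → 𝕜)‖ * (‖A‖ * ‖WithLp.toLp 2 (1 : n → 𝕜)‖) := by
        rw [hsum]
        refine (norm_inner_le_norm _ _).trans ?_
        gcongr
        exact l2_opNorm_mulVec A (WithLp.toLp 2 1)
    _ = √(Fintype.card m) * ‖A‖ * √(Fintype.card n) := by
        simp [EuclideanSpace.norm_eq, mul_assoc]

lemma exists_lt_norm_triangularTruncation (K : ℝ) : ∃ (n : ℕ) (A : Matrix (Fin n) (Fin n) ℂ),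
    K * ‖A‖ < ‖triangularTruncation A‖ := by
  -- With `ε = 1 / m` and `k = m ^ 2`, `‖A‖ ^ 2` stays below `exp 1` while the truncation grows.
  obtain ⟨m, hm⟩ := exists_nat_gt (4 * |K|)
  have hm0 : (0 : ℝ) < m := (by positivity : (0 : ℝ) ≤ 4 * |K|).trans_lt hm
  obtain ⟨n, A, hn, hA, -, htrunc⟩ := exists_sum_triangularTruncation_eq (m : ℝ)⁻¹ (m ^ 2)
  have : NeZero n := ⟨hn.ne'⟩
  have hnorm : ‖A‖ ≤ 2 := by
    have hexp : (1 + (m : ℝ)⁻¹ ^ 2) ^ (m ^ 2) ≤ 4 := by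
      have hle := Real.one_add_inv_pow_le_exp (n := m ^ 2)
      rw [Nat.cast_pow, ← inv_pow] at hle
      linarith [Real.exp_one_lt_d9]
    refine abs_le_of_sq_le_sq' ?_ zero_le_two |>.2
    calc ‖A‖ ^ 2 = ‖Aᴴ * A‖ := by rw [l2_opNorm_conjTranspose_mul_self, sq]
      _ ≤ 2 ^ 2 := by
        rw [hA, norm_smul, CStarRing.norm_one, Real.norm_of_nonneg (by positivity)]
        linarith
  have hlower : 1 + m / 2 ≤ ‖triangularTruncation A‖ := by
    have hentries := norm_sum_entries_le (triangularTruncation A)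
    have hsum : (n * (1 + (m ^ 2 : ℕ) * ((m : ℝ)⁻¹ : ℝ) / 2) : ℂ) = (n * (1 + m / 2) : ℝ) := by
      push_cast
      field_simp
    rw [htrunc, hsum, Complex.norm_of_nonneg (by positivity), Fintype.card_fin, mul_right_comm,
      Real.mul_self_sqrt n.cast_nonneg] at hentries
    exact le_of_mul_le_mul_left hentries (by positivity)
  refine ⟨n, A, ?_⟩
  calc K * ‖A‖ ≤ |K| * 2 := by gcongr; exact le_abs_self K
    _ < 1 + m / 2 := by linarith
    _ ≤ _ := hlower

end TriangularTruncation

section Lacunary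

/-- Lacunarity with ratios tending to `0`: each term of `r` is smaller than all the previous ones,
by a factor which is at least `2` and grows along the sequence. Applied to `‖w k‖` or `‖w k‖⁻¹`, it
says that one of any two terms of `w` dominates the other. -/
def IsLacunary (r : ℕ → ℝ) : Prop := ∀ ⦃i j⦄, i < j → (i + 2) * r j ≤ r i

lemma IsLacunary.tendsto_div {r : ℕ → ℝ} (hr : IsLacunary r) (hpos : ∀ k, 0 < r k)
    {φ ψ : ℕ → ℕ} (hφ : ∀ N, N ≤ φ N) (hφψ : ∀ N, φ N < ψ N) :
    Tendsto (fun N => r (ψ N) / r (φ N)) atTop (𝓝 0) := by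
  have hinv : Tendsto (fun N => ((φ N : ℝ) + 2)⁻¹) atTop (𝓝 0) :=
    ((tendsto_natCast_atTop_atTop.comp (tendsto_atTop_mono hφ tendsto_id)).atTop_add
      tendsto_const_nhds).inv_tendsto_atTop
  refine squeeze_zero (fun N => (div_pos (hpos _) (hpos _)).le) (fun N => ?_) hinv
  rw [div_le_iff₀ (hpos _), le_inv_mul_iff₀ (by positivity)]
  exact hr (hφψ N)

lemma IsLacunary.two_mul_le {r : ℕ → ℝ} (hr : IsLacunary r) (hpos : ∀ k, 0 < r k) {i j : ℕ}
    (hij : i < j) : 2 * r j ≤ r i := by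
  refine le_trans ?_ (hr hij)
  gcongr
  · exact (hpos j).le
  · linarith [i.cast_nonneg (α := ℝ)]

lemma exists_strictMono_isLacunary {r : ℕ → ℝ} (hpos : ∀ k, 0 < r k)
    (hr : Tendsto r atTop (𝓝 0)) : ∃ φ : ℕ → ℕ, StrictMono φ ∧ IsLacunary (r ∘ φ) := by
  obtain ⟨φ, -, hφ⟩ := exists_seq_of_forall_finset_exists (fun _ : ℕ => True)
    (fun m n => m < n ∧ (m + 2) * r n ≤ r m) fun s _ => by
      have hev (m : ℕ) : ∀ᶠ n in atTop, m < n ∧ (m + 2) * r n ≤ r m := by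
        refine (eventually_gt_atTop m).and ?_
        have hlim : Tendsto (fun n => (m + 2) * r n) atTop (𝓝 0) := by
          simpa using hr.const_mul (m + 2 : ℝ)
        exact (hlim.eventually_lt_const (hpos m)).mono fun n => le_of_lt
      obtain ⟨n, hn⟩ := ((eventually_all_finset s).2 fun m _ => hev m).exists
      exact ⟨n, trivial, hn⟩
  have hmono : StrictMono φ := fun i j hij => (hφ i j hij).1
  refine ⟨φ, hmono, fun i j hij => le_trans ?_ (hφ i j hij).2⟩
  have hi : i ≤ φ i := hmono.le_apply
  simp only [Function.comp_apply]
  gcongr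
  exact (hpos _).le

lemma exists_tendsto_star_div (w : ℕ → ℂ) (hw : ∀ k, w k ≠ 0) :
    ∃ (η : ℂ) (φ : ℕ → ℕ), ‖η‖ = 1 ∧ StrictMono φ ∧
      Tendsto (fun k => star (w (φ k)) / w (φ k)) atTop (𝓝 η) := by
  obtain ⟨η, hη, φ, hφ, hlim⟩ := (isCompact_sphere (0 : ℂ) 1).tendsto_subseq
    (x := fun k => star (w k) / w k) fun k => by simp [hw k]
  exact ⟨η, φ, by simpa using hη, hφ, hlim⟩

lemma exists_tendsto_norm_or_tendsto_inv_norm {E : Type*} [NormedAddCommGroup E] [ProperSpace E]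
    {F : Set E} (hF : F.Infinite) : ∃ (c : E) (w : ℕ → E), (∀ k, w k ≠ 0) ∧ (∀ k, w k + c ∈ F) ∧
      (Tendsto (fun k => ‖w k‖) atTop (𝓝 0) ∨ Tendsto (fun k => ‖w k‖⁻¹) atTop (𝓝 0)) := by
  by_cases hb : Bornology.IsBounded F
  · obtain ⟨c, -, hc⟩ := hF.exists_accPt_of_subset_isCompact hb.isCompact_closure subset_closure
    rw [accPt_principal_iff_clusterPt, ← mem_closure_iff_clusterPt, mem_closure_iff_seq_limit] at hc
    obtain ⟨z, hzF, hz⟩ := hc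
    refine ⟨c, fun k => z k - c, fun k => sub_ne_zero.2 (hzF k).2, fun k => ?_, .inl ?_⟩
    · simpa using (hzF k).1
    · simpa using (hz.sub_const c).norm
  · simp only [isBounded_iff_forall_norm_le, not_exists, not_forall, not_le] at hb
    choose z hzF hz using fun k : ℕ => hb k
    refine ⟨0, z, fun k => ?_, by simpa using hzF, .inr ?_⟩
    · exact norm_pos_iff.1 (k.cast_nonneg.trans_lt (hz k))
    · exact (tendsto_atTop_mono (fun k => (hz k).le) tendsto_natCast_atTop_atTop).inv_tendsto_atTop

lemma exists_isLacunary {F : Set ℂ} (hF : F.Infinite) :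
    ∃ (c η : ℂ) (w : ℕ → ℂ), ‖η‖ = 1 ∧ (∀ k, w k ≠ 0) ∧ (∀ k, w k + c ∈ F) ∧
      Tendsto (fun k => star (w k) / w k) atTop (𝓝 η) ∧
      (IsLacunary (fun k => ‖w k‖) ∨ IsLacunary (fun k => ‖w k‖⁻¹)) := by
  obtain ⟨c, w, hw, hwF, hlim⟩ := exists_tendsto_norm_or_tendsto_inv_norm hF
  obtain ⟨η, φ, hη, hφ, hφη⟩ := exists_tendsto_star_div w hw
  have hpos (k : ℕ) : 0 < ‖w (φ k)‖ := norm_pos_iff.2 (hw _)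
  obtain ⟨ψ, hψ, hlac⟩ : ∃ ψ : ℕ → ℕ, StrictMono ψ ∧
      (IsLacunary (fun k => ‖w (φ (ψ k))‖) ∨ IsLacunary (fun k => ‖w (φ (ψ k))‖⁻¹)) := by
    rcases hlim with h | h
    · obtain ⟨ψ, hψ, hlac⟩ := exists_strictMono_isLacunary hpos (h.comp hφ.tendsto_atTop)
      exact ⟨ψ, hψ, .inl hlac⟩
    · obtain ⟨ψ, hψ, hlac⟩ := exists_strictMono_isLacunary (fun k => inv_pos.2 (hpos k))
        (h.comp hφ.tendsto_atTop)
      exact ⟨ψ, hψ, .inr hlac⟩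
  exact ⟨c, η, w ∘ φ ∘ ψ, hη, fun _ => hw _, fun _ => hwF _, hφη.comp hψ.tendsto_atTop, hlac⟩

lemma norm_add_norm_le_three_mul_norm_sub {E : Type*} [SeminormedAddCommGroup E] {x y : E}
    (h : 2 * ‖y‖ ≤ ‖x‖) : ‖x‖ + ‖y‖ ≤ 3 * ‖x - y‖ := by
  linarith [norm_sub_norm_le x y]

lemma norm_add_norm_le_of_isLacunary {E : Type*} [NormedAddCommGroup E] {w : ℕ → E}
    (hw : ∀ k, w k ≠ 0)
    (hlac : IsLacunary (fun k => ‖w k‖) ∨ IsLacunary (fun k => ‖w k‖⁻¹))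
    (i j : ℕ) (hij : i ≠ j) : ‖w i‖ + ‖w j‖ ≤ 3 * ‖w i - w j‖ := by
  have hpos (k : ℕ) : 0 < ‖w k‖ := norm_pos_iff.2 (hw k)
  wlog hlt : i < j generalizing i j
  · rw [add_comm, norm_sub_rev]
    exact this j i hij.symm (by omega)
  rcases hlac with hlac | hlac
  · exact norm_add_norm_le_three_mul_norm_sub (hlac.two_mul_le hpos hlt)
  · rw [add_comm, norm_sub_rev]
    refine norm_add_norm_le_three_mul_norm_sub ?_
    have hinv := hlac.two_mul_le (fun k => inv_pos.2 (hpos k)) hlt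
    rwa [← div_eq_mul_inv, div_le_iff₀ (hpos j), inv_mul_eq_div, le_div_iff₀ (hpos i)] at hinv

lemma injective_of_norm_add_norm_le {ι E : Type*} [NormedAddCommGroup E] {w : ι → E} {K : ℝ}
    (hw : ∀ k, w k ≠ 0) (hsep : ∀ i j, i ≠ j → ‖w i‖ + ‖w j‖ ≤ K * ‖w i - w j‖) :
    Function.Injective w := by
  intro i j hij
  by_contra hne
  have hle := hsep i j hne
  rw [hij, sub_self, norm_zero, mul_zero] at hle
  linarith [norm_pos_iff.2 (hw j)]

lemma exists_lipschitzWith_eq_mul {w : ℕ → ℂ} (hw : ∀ k, w k ≠ 0)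
    (hsep : ∀ i j, i ≠ j → ‖w i‖ + ‖w j‖ ≤ 3 * ‖w i - w j‖) (c : ℂ) {α : ℕ → ℂ}
    (hα : ∀ k, ‖α k‖ ≤ 1) :
    ∃ (f : ℂ → ℂ) (L : ℝ≥0), LipschitzWith L f ∧ ∀ k, f (w k + c) = α k * w k := by
  have hinj : Function.Injective fun k => w k + c :=
    (add_left_injective c).comp (injective_of_norm_add_norm_le hw hsep)
  set g : ℂ → ℂ := Function.extend (fun k => w k + c) (fun k => α k * w k) 0
  have hg (k : ℕ) : g (w k + c) = α k * w k := hinj.extend_apply ..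
  have hlip : LipschitzOnWith 3 g (Set.range fun k => w k + c) := by
    refine LipschitzOnWith.of_dist_le_mul ?_
    rintro - ⟨i, rfl⟩ - ⟨j, rfl⟩
    rcases eq_or_ne i j with rfl | hij
    · simp
    simp only [hg, dist_eq_norm, add_sub_add_right_eq_sub]
    calc ‖α i * w i - α j * w j‖ ≤ ‖α i‖ * ‖w i‖ + ‖α j‖ * ‖w j‖ := by
          simpa only [norm_mul] using norm_sub_le (α i * w i) (α j * w j)
      _ ≤ 1 * ‖w i‖ + 1 * ‖w j‖ := by gcongr <;> apply hα
      _ ≤ 3 * ‖w i - w j‖ := by simpa using hsep i j hij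
  obtain ⟨f, hf, hfg⟩ := hlip.extend_finite_dimension
  exact ⟨f, _, hf, fun k => (hfg ⟨k, rfl⟩).symm.trans (hg k)⟩

section Dominant

variable {x y : ℕ → ℂ} (hx : ∀ N, x N ≠ 0) (hyx : Tendsto (fun N => y N / x N) atTop (𝓝 0))
include hx hyx

lemma tendsto_slope_of_tendsto_div {f : ℂ → ℂ} {c α β : ℂ} (hfx : ∀ N, f (x N + c) = α * x N)
    (hfy : ∀ N, f (y N + c) = β * y N) :
    Tendsto (fun N => slope f (y N + c) (x N + c)) atTop (𝓝 α) := by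
  have hlim : Tendsto (fun N => (α - β * (y N / x N)) / (1 - y N / x N)) atTop (𝓝 α) := by
    have hcont : ContinuousAt (fun t : ℂ => (α - β * t) / (1 - t)) 0 := by fun_prop (disch := simp)
    simpa [Function.comp_def] using hcont.tendsto.comp hyx
  refine hlim.congr fun N => ?_
  rw [slope_def_field, hfx, hfy, add_sub_add_right_eq_sub, ← mul_div_mul_right _ _ (hx N)]
  simp only [sub_mul, mul_assoc, div_mul_cancel₀ _ (hx N), one_mul]

lemma tendsto_star_sub_div_sub {η : ℂ} (hη : Tendsto (fun N => star (x N) / x N) atTop (𝓝 η)) :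
    Tendsto (fun N => star (x N - y N) / (x N - y N)) atTop (𝓝 η) := by
  have hlim : Tendsto (fun N => star (x N) / x N * (1 - star (y N / x N)) / (1 - y N / x N)) atTop
      (𝓝 η) := by
    have hcont : ContinuousAt (fun t : ℂ => (1 - star t) / (1 - t)) 0 := by
      fun_prop (disch := simp)
    simpa [mul_div_assoc] using hη.mul (hcont.tendsto.comp hyx)
  refine hlim.congr fun N => ?_
  have hsx : star (x N) ≠ 0 := star_ne_zero.2 (hx N)
  rw [star_div₀, ← mul_div_mul_right _ _ (hx N), sub_mul, div_mul_cancel₀ _ (hx N), one_mul,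
    mul_right_comm, div_mul_cancel₀ _ (hx N), mul_sub, mul_div_cancel₀ _ hsx, mul_one, star_sub]

end Dominant

/-- The numbers `α` and `β` are the slopes prescribed at the even and odd terms of `w`. -/
lemma exists_coeff_tendsto_div {w : ℕ → ℂ} (hw : ∀ k, w k ≠ 0)
    (hlac : IsLacunary (fun k => ‖w k‖) ∨ IsLacunary (fun k => ‖w k‖⁻¹)) :
    ∃ α β : ℂ, ‖α‖ ≤ 1 ∧ ‖β‖ ≤ 1 ∧ ∀ a b : ℕ,
      ((if a ≤ b then 1 else 0) = α ∧
        Tendsto (fun N => w (2 * (N + b) + 1) / w (2 * (N + a))) atTop (𝓝 0)) ∨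
      ((if a ≤ b then 1 else 0) = β ∧
        Tendsto (fun N => w (2 * (N + a)) / w (2 * (N + b) + 1)) atTop (𝓝 0)) := by
  have hpos (k : ℕ) : 0 < ‖w k‖ := norm_pos_iff.2 (hw k)
  rcases hlac with hlac | hlac
  · refine ⟨1, 0, by simp, by simp, fun a b => ?_⟩
    rcases le_or_gt a b with hab | hab
    · refine .inl ⟨if_pos hab, tendsto_zero_iff_norm_tendsto_zero.2 ?_⟩
      simpa only [norm_div] using
        hlac.tendsto_div hpos (fun N => by omega) (fun N => by omega)
    · refine .inr ⟨if_neg hab.not_ge, tendsto_zero_iff_norm_tendsto_zero.2 ?_⟩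
      simpa only [norm_div] using
        hlac.tendsto_div hpos (fun N => by omega) (fun N => by omega)
  · refine ⟨0, 1, by simp, by simp, fun a b => ?_⟩
    have hpos' (k : ℕ) : 0 < ‖w k‖⁻¹ := inv_pos.2 (hpos k)
    rcases le_or_gt a b with hab | hab
    · refine .inr ⟨if_pos hab, tendsto_zero_iff_norm_tendsto_zero.2 ?_⟩
      simpa only [norm_div, inv_div_inv] using
        hlac.tendsto_div hpos' (fun N => by omega) (fun N => by omega)
    · refine .inl ⟨if_neg hab.not_ge, tendsto_zero_iff_norm_tendsto_zero.2 ?_⟩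
      simpa only [norm_div, inv_div_inv] using
        hlac.tendsto_div hpos' (fun N => by omega) (fun N => by omega)

lemma exists_lipschitzWith_tendsto_slope {F : Set ℂ} (hF : F.Infinite) :
    ∃ (f : ℂ → ℂ) (L : ℝ≥0) (η : ℂ) (p q : ℕ → ℕ → ℂ), LipschitzWith L f ∧ ‖η‖ = 1 ∧
      (∀ a N, p a N ∈ F) ∧ (∀ b N, q b N ∈ F) ∧ (∀ a b N, p a N ≠ q b N) ∧
      (∀ a b, Tendsto (fun N => slope f (q b N) (p a N)) atTop (𝓝 (if a ≤ b then 1 else 0))) ∧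
      ∀ a b, Tendsto (fun N => star (p a N - q b N) / (p a N - q b N)) atTop (𝓝 η) := by
  obtain ⟨c, η, w, hη, hw, hwF, hphase, hlac⟩ := exists_isLacunary hF
  obtain ⟨α, β, hα, hβ, hdom⟩ := exists_coeff_tendsto_div hw hlac
  have hsep := norm_add_norm_le_of_isLacunary hw hlac
  obtain ⟨f, L, hf, hfw⟩ := exists_lipschitzWith_eq_mul hw hsep c
    (α := fun k => if Even k then α else β) fun k => by split_ifs <;> assumption
  have hfp (a N : ℕ) : f (w (2 * (N + a)) + c) = α * w (2 * (N + a)) := by simp [hfw]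
  have hfq (b N : ℕ) : f (w (2 * (N + b) + 1) + c) = β * w (2 * (N + b) + 1) := by simp [hfw]
  have heven (a : ℕ) : Tendsto (fun N => 2 * (N + a)) atTop atTop :=
    tendsto_atTop_mono (fun N => (by omega : N ≤ _)) tendsto_id
  have hodd (b : ℕ) : Tendsto (fun N => 2 * (N + b) + 1) atTop atTop :=
    tendsto_atTop_mono (fun N => (by omega : N ≤ _)) tendsto_id
  refine ⟨f, L, η, fun a N => w (2 * (N + a)) + c, fun b N => w (2 * (N + b) + 1) + c, hf, hη,
    fun a N => hwF _, fun b N => hwF _, fun a b N h => ?_, fun a b => ?_, fun a b => ?_⟩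
  · have hindex := injective_of_norm_add_norm_le hw hsep (add_right_cancel h)
    omega
  · rcases hdom a b with ⟨hval, hlim⟩ | ⟨hval, hlim⟩
    · rw [hval]
      exact tendsto_slope_of_tendsto_div (fun _ => hw _) hlim (hfp a) (hfq b)
    · rw [hval]
      simpa only [slope_comm] using
        tendsto_slope_of_tendsto_div (fun _ => hw _) hlim (hfq b) (hfp a)
  · simp only [add_sub_add_right_eq_sub]
    rcases hdom a b with ⟨-, hlim⟩ | ⟨-, hlim⟩
    · exact tendsto_star_sub_div_sub (fun _ => hw _) hlim (hphase.comp (heven a))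
    · refine (tendsto_star_sub_div_sub (fun _ => hw _) hlim
        (hphase.comp (hodd b))).congr fun N => ?_
      rw [← neg_sub, star_neg, neg_div_neg_eq]

end Lacunary

theorem stmt_18_general {H : Type*} [NormedAddCommGroup H] [InnerProductSpace ℂ H]
    [CompleteSpace H] (hH : ¬ FiniteDimensional ℂ H) {F : Set ℂ} (hF : F.Infinite) :
    ∃ (f : ℂ → ℂ) (L : ℝ≥0), LipschitzWith L f ∧
      ∀ C : ℝ≥0, ¬ OperatorLipschitzOnWith (H →L[ℂ] H) C f F := by
  obtain ⟨f, L, η, p, q, hf, hη, hp, hq, hpq, hslope, hphase⟩ :=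
    exists_lipschitzWith_tendsto_slope hF
  refine ⟨f, L, hf, fun C hC => ?_⟩
  obtain ⟨n, A, hA⟩ := exists_lt_norm_triangularTruncation (2 * C)
  have hmatrix := hC.matrix hf.continuous.continuousOn hF.nonempty hH (Fin n ⊕ Fin n)
  exact hA.not_ge <| hmatrix.norm_triangularTruncation_le hf.continuous.continuousOn
    (p := fun a => p a) (q := fun b => q b) (fun a => hp a) (fun b => hq b) (fun a b => hpq a b) hη
    (fun a b => hslope a b) (fun a b => hphase a b) A

/-- If `F` is a closed infinite subset of `ℂ`, then there is a function
`f : ℂ → ℂ` which is Lipschitz on `F` (with some constant `L ≥ 0`) but not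
operator Lipschitz on `F`: for every `C ≥ 0` there are bounded normal operators
`N₁`, `N₂` on `ℓ²(ℕ, ℂ)` with spectra in `F` such that
`‖f(N₁) - f(N₂)‖ > C * ‖N₁ - N₂‖`. -/
theorem stmt_18 (F : Set ℂ) (hF : IsClosed F) (hinf : F.Infinite) :
    ∃ (f : ℂ → ℂ) (L : ℝ), 0 ≤ L ∧
      (∀ z ∈ F, ∀ w ∈ F, ‖f z - f w‖ ≤ L * ‖z - w‖) ∧
      ∀ C : ℝ, 0 ≤ C →
        ∃ N₁ N₂ : lp (fun _ : ℕ => ℂ) 2 →L[ℂ] lp (fun _ : ℕ => ℂ) 2,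
          IsStarNormal N₁ ∧ IsStarNormal N₂ ∧
          spectrum ℂ N₁ ⊆ F ∧ spectrum ℂ N₂ ⊆ F ∧
          C * ‖N₁ - N₂‖ < ‖cfc f N₁ - cfc f N₂‖ := by
  obtain ⟨f, L, hf, hfop⟩ :=
    stmt_18_general (not_finiteDimensional_lp (𝕜 := ℂ) (ι := ℕ)) hinf
  refine ⟨f, L, L.2, fun z _ w _ => hf.norm_sub_le z w, fun C hC => ?_⟩
  exact not_operatorLipschitzOnWith_iff.1 (hfop ⟨C, hC⟩)
end

section
/- Transfer of operator Lipschitzness from the line to the circle: Let f : ℂ → ℂ be continuous and define g : ℂ → ℂ by g(z) = f(exp(i·z)). Let M ≥ 0 and suppose that for every complex Hilbert space H and all bounded self-adjoint operators A, B on H, ‖g(A) − g(B)‖ ≤ M·‖A − B‖ (i.e. the 2π-periodic function x ↦ f(e^{ix}) is operator Lipschitz on ℝ with constant M). Then for every complex Hilbert space H and all unitary operators U, V on H, ‖f(U) − f(V)‖ ≤ (3·√2·π/2)·M·‖U − V‖. -/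
/-!
The idea is to realise a unitary `U` as the `N`-th power of a unitary `S` that is almost the
identity on the relevant vectors. On `ℓ²(ZMod N, H)` the cyclic shift with twist `U` at one site is
such a root: `S ^ N` acts as `U` at every site. The operator `A = N • ℑ S` is self-adjoint, and as
`θ - sin θ = O(|exp (i θ) - 1| ^ 2)` on `(-π, π]`, the difference `f (exp (i A)) - f (S ^ N)` is
controlled by `(S - 1) ^ 2`, which is small on vectors that vary slowly from site to site and vanish
next to the twist.

If `V = r ^ k * U`, let `T` have the additional twist `r` at `k` sites where the slowly varying
profile, a tent, vanishes. Then `‖S - T‖ ≤ ‖r - 1‖`, and the hypothesis applied to `N • ℑ S` and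
`N • ℑ T` bounds `‖f(U) - f(V)‖` by about `M * N * ‖r - 1‖`. Taking `r = exp (i D / k)` and letting
`k / N → 1` gives the sharp estimate `‖f(U) - f(exp (i D) * U)‖ ≤ M * ‖D‖`.

If `‖U - V‖ < 2`, then `V` and `U` are related by such a `D` with `‖D‖ ≤ π / 2 * ‖U - V‖`. If
`‖U - V‖ ≥ 2`, it is enough that `f` oscillates by at most `M * π` from `1` on the unit circle.
-/

open Complex ComplexStarModule Filter Topology
open scoped ComplexOrder InnerProductSpace InnerProduct

universe u

/-! ### Scalar consequences of operator Lipschitzness -/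

/-- `g` is operator Lipschitz on `ℝ` with constant `M`, tested on bounded self-adjoint operators on
complex Hilbert spaces in the universe `u`. Only the restriction of `g` to `ℝ` matters. -/
def OperatorLipschitzWith (M : ℝ) (g : ℂ → ℂ) : Prop :=
  ∀ (H : Type u) [NormedAddCommGroup H] [InnerProductSpace ℂ H] [CompleteSpace H]
    (A B : H →L[ℂ] H), IsSelfAdjoint A → IsSelfAdjoint B → ‖cfc g A - cfc g B‖ ≤ M * ‖A - B‖


theorem abs_arg_sub_im_le {ζ : ℂ} (hζ : ‖ζ‖ = 1) : |ζ.arg - ζ.im| ≤ 2 * ‖(ζ - 1) ^ 2‖ := by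
  have arg_le : |ζ.arg| ≤ Real.pi / 2 * ‖ζ - 1‖ := by
    rw [← angle_one_right (norm_ne_zero_iff.mp (by simp [hζ]))]
    exact angle_le_mul_norm_sub hζ norm_one
  have sin_arg_eq : Real.sin ζ.arg = ζ.im := by rw [sin_arg, hζ, div_one]
  have pi_lt : Real.pi < 3.15 := Real.pi_lt_d2
  calc |ζ.arg - ζ.im| ≤ |ζ.arg| ^ 3 / 6 := sin_arg_eq ▸ Real.abs_sub_sin_le ζ.arg
    _ = |ζ.arg| * |ζ.arg| ^ 2 / 6 := by ring
    _ ≤ Real.pi * (Real.pi / 2 * ‖ζ - 1‖) ^ 2 / 6 := by gcongr; exact abs_arg_le_pi ζ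
    _ = Real.pi ^ 3 / 24 * ‖(ζ - 1) ^ 2‖ := by rw [norm_pow]; ring
    _ ≤ 3.15 ^ 3 / 24 * ‖(ζ - 1) ^ 2‖ := by gcongr
    _ ≤ 2 * ‖(ζ - 1) ^ 2‖ := by gcongr; norm_num

namespace OperatorLipschitzWith

variable {M : ℝ} {g : ℂ → ℂ}

theorem norm_sub_le (hg : OperatorLipschitzWith.{u} M g) (x y : ℝ) :
    ‖g x - g y‖ ≤ M * |x - y| := by
  have scalar_isSelfAdjoint (t : ℝ) : IsSelfAdjoint
      (algebraMap ℂ (EuclideanSpace ℂ PUnit.{u + 1} →L[ℂ] EuclideanSpace ℂ PUnit) t) :=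
    .algebraMap _ (conj_ofReal t)
  have := hg _ _ _ (scalar_isSelfAdjoint x) (scalar_isSelfAdjoint y)
  rwa [cfc_algebraMap, cfc_algebraMap, ← map_sub, ← map_sub, norm_algebraMap', norm_algebraMap',
    ← ofReal_sub, norm_real, Real.norm_eq_abs] at this

theorem continuousOn_range_ofReal (hg : OperatorLipschitzWith.{u} M g) :
    ContinuousOn g (Set.range ofReal) := by
  refine (LipschitzOnWith.of_dist_le' (K := M) ?_).continuousOn
  rintro _ ⟨x, rfl⟩ _ ⟨y, rfl⟩
  simpa [dist_eq_norm, ← ofReal_sub] using hg.norm_sub_le x y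

theorem nonneg (hg : OperatorLipschitzWith.{u} M g) : 0 ≤ M := by
  simpa using (norm_nonneg _).trans (hg.norm_sub_le 1 0)

variable {f : ℂ → ℂ} {z w : ℂ}

theorem norm_sub_le_angle (hf : OperatorLipschitzWith.{u} M fun z ↦ f (exp (I * z)))
    (hz : ‖z‖ = 1) (hw : ‖w‖ = 1) : ‖f z - f w‖ ≤ M * InnerProductGeometry.angle z w := by
  have hw₀ : w ≠ 0 := norm_ne_zero_iff.mp (by simp [hw])
  have exp_arg {v : ℂ} (hv : ‖v‖ = 1) : exp (I * v.arg) = v := by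
    simpa [hv, mul_comm] using norm_mul_exp_arg_mul_I v
  have exp_add : exp (I * (w.arg + (z / w).arg : ℝ)) = z := by
    rw [ofReal_add, mul_add, exp_add, exp_arg hw, exp_arg (by simp [hz, hw]), mul_div_cancel₀ _ hw₀]
  have := hf.norm_sub_le (w.arg + (z / w).arg) w.arg
  rwa [exp_add, exp_arg hw, add_sub_cancel_left,
    ← angle_eq_abs_arg (norm_ne_zero_iff.mp (by simp [hz])) hw₀] at this

theorem norm_sub_le_chord (hf : OperatorLipschitzWith.{u} M fun z ↦ f (exp (I * z)))
    (hz : ‖z‖ = 1) (hw : ‖w‖ = 1) : ‖f z - f w‖ ≤ M * (Real.pi / 2 * ‖z - w‖) :=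
  (hf.norm_sub_le_angle hz hw).trans <|
    mul_le_mul_of_nonneg_left (angle_le_mul_norm_sub hz hw) hf.nonneg

theorem continuousOn_sphere (hf : OperatorLipschitzWith.{u} M fun z ↦ f (exp (I * z))) :
    ContinuousOn f (Metric.sphere 0 1) := by
  refine (LipschitzOnWith.of_dist_le' (K := M * (Real.pi / 2)) fun z hz w hw ↦ ?_).continuousOn
  rw [dist_eq_norm, dist_eq_norm, mul_assoc]
  exact hf.norm_sub_le_chord (mem_sphere_zero_iff_norm.mp hz) (mem_sphere_zero_iff_norm.mp hw)

theorem norm_exp_im_sub_pow_le (hf : OperatorLipschitzWith.{u} M fun z ↦ f (exp (I * z)))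
    {ζ : ℂ} (hζ : ‖ζ‖ = 1) (N : ℕ) :
    ‖f (exp (I * (N * ζ.im))) - f (ζ ^ N)‖ ≤ M * N * (2 * ‖(ζ - 1) ^ 2‖) := by
  have exp_arg : exp (I * (N * ζ.arg)) = ζ ^ N := by
    conv_rhs => rw [← norm_mul_exp_arg_mul_I ζ, hζ, ofReal_one, one_mul, ← exp_nat_mul]
    ring_nf
  have hM : 0 ≤ M := hf.nonneg
  calc ‖f (exp (I * (N * ζ.im))) - f (ζ ^ N)‖ ≤ M * |N * ζ.im - N * ζ.arg| := by
        simpa [exp_arg] using hf.norm_sub_le (N * ζ.im) (N * ζ.arg)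
    _ = M * N * |ζ.arg - ζ.im| := by
        rw [← mul_sub, abs_mul, Nat.abs_cast, abs_sub_comm, mul_assoc]
    _ ≤ M * N * (2 * ‖(ζ - 1) ^ 2‖) := by gcongr; exact abs_arg_sub_im_le hζ

end OperatorLipschitzWith

/-! ### Functional calculus and intertwining operators -/

section cfc

variable {H E : Type*} [NormedAddCommGroup H] [InnerProductSpace ℂ H] [CompleteSpace H]
  [NormedAddCommGroup E] [InnerProductSpace ℂ E] [CompleteSpace E]

theorem norm_apply_le_norm_apply_of_star_mul_self_le {S T : H →L[ℂ] H}
    (h : star S * S ≤ star T * T) (x : H) : ‖S x‖ ≤ ‖T x‖ := by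
  have diff_nonneg := ((ContinuousLinearMap.le_def _ _).mp h).re_inner_nonneg_left x
  rw [sub_apply, inner_sub_left, map_sub] at diff_nonneg
  rw [← sq_le_sq₀ (norm_nonneg _) (norm_nonneg _), S.apply_norm_sq_eq_inner_adjoint_left,
    T.apply_norm_sq_eq_inner_adjoint_left]
  exact sub_nonneg.mp diff_nonneg

theorem norm_cfc_apply_le_norm_cfc_apply {a : H →L[ℂ] H} {F G : ℂ → ℂ}
    (hF : ContinuousOn F (spectrum ℂ a)) (hG : ContinuousOn G (spectrum ℂ a))
    (h : ∀ z ∈ spectrum ℂ a, ‖F z‖ ≤ ‖G z‖) (x : H) : ‖cfc F a x‖ ≤ ‖cfc G a x‖ := by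
  apply norm_apply_le_norm_apply_of_star_mul_self_le
  rw [← cfc_star, ← cfc_star, ← cfc_mul .., ← cfc_mul ..]
  refine cfc_mono fun z hz ↦ ?_
  simp only [RCLike.star_def, conj_mul']
  exact_mod_cast pow_le_pow_left₀ (norm_nonneg _) (h z hz) 2

/-- The star algebra of pairs `(a, b)` for which `J` intertwines `a` with `b` and `star a` with
`star b`. It is closed, hence stable under the functional calculus of the pair. -/
def intertwiningPairs (J : H →L[ℂ] E) : StarSubalgebra ℂ ((E →L[ℂ] E) × (H →L[ℂ] H)) where
  carrier := {p | p.1 ∘L J = J ∘L p.2 ∧ star p.1 ∘L J = J ∘L star p.2}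
  mul_mem' := by
    rintro p q ⟨hp, hp'⟩ ⟨hq, hq'⟩
    simp only [ContinuousLinearMap.ext_iff, ContinuousLinearMap.comp_apply] at hp hp' hq hq'
    constructor <;> ext x <;> simp [hp, hp', hq, hq']
  add_mem' := by
    rintro p q ⟨hp, hp'⟩ ⟨hq, hq'⟩
    constructor <;> simp [ContinuousLinearMap.add_comp, *]
  algebraMap_mem' c := by
    constructor <;> ext x <;> simp [Algebra.algebraMap_eq_smul_one]
  star_mem' := by rintro p ⟨hp, hp'⟩; simpa using ⟨hp', hp⟩

theorem isClosed_intertwiningPairs (J : H →L[ℂ] E) :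
    IsClosed (intertwiningPairs J : Set ((E →L[ℂ] E) × (H →L[ℂ] H))) :=
  (isClosed_eq (by fun_prop) (by fun_prop)).inter (isClosed_eq (by fun_prop) (by fun_prop))

theorem cfc_comp_eq_comp_cfc {a : E →L[ℂ] E} {b : H →L[ℂ] H} (ha : IsStarNormal a)
    (hb : IsStarNormal b) {J : H →L[ℂ] E} (hJ : a ∘L J = J ∘L b)
    (hJ_star : star a ∘L J = J ∘L star b) {f : ℂ → ℂ}
    (hf : ContinuousOn f (spectrum ℂ a ∪ spectrum ℂ b)) : cfc f a ∘L J = J ∘L cfc f b := by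
  have hab : IsStarNormal (a, b) := ⟨Prod.ext ha.star_comm_self hb.star_comm_self⟩
  have pair_mem : (a, b) ∈ intertwiningPairs J := ⟨hJ, hJ_star⟩
  have cfc_mem : cfc f (a, b) ∈ intertwiningPairs J :=
    StarAlgebra.elemental.le_of_mem (isClosed_intertwiningPairs J) pair_mem
      (cfc_mem_elemental f (a, b))
  rw [cfc_map_prod (S := ℂ) f a b hf hab ha hb] at cfc_mem
  exact cfc_mem.1

theorem cfc_comp_eq_comp_cfc_of_mem_unitary {S : E →L[ℂ] E} {U : H →L[ℂ] H}
    (hS : S ∈ unitary (E →L[ℂ] E)) (hU : U ∈ unitary (H →L[ℂ] H)) {J : H →L[ℂ] E}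
    (hJ : S ∘L J = J ∘L U) {f : ℂ → ℂ} (hf : ContinuousOn f (Metric.sphere 0 1)) :
    cfc f S ∘L J = J ∘L cfc f U := by
  have star_S_mul : star S ∘L S = .id ℂ E := Unitary.star_mul_self_of_mem hS
  have mul_star_U : U ∘L star U = .id ℂ H := Unitary.mul_star_self_of_mem hU
  have star_comp : star S ∘L J = J ∘L star U := calc
    star S ∘L J = star S ∘L (J ∘L U) ∘L star U := by
      rw [J.comp_assoc, mul_star_U, J.comp_id]
    _ = (star S ∘L S) ∘L J ∘L star U := by
      rw [← hJ]; rfl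
    _ = J ∘L star U := by rw [star_S_mul]; rfl
  exact cfc_comp_eq_comp_cfc (isStarNormal_of_mem_unitary hS) (isStarNormal_of_mem_unitary hU)
    hJ star_comp <| hf.mono <|
      Set.union_subset (spectrum.subset_circle_of_unitary hS) (spectrum.subset_circle_of_unitary hU)

end cfc

namespace OperatorLipschitzWith

variable {M : ℝ} {g f : ℂ → ℂ} {H E : Type u}
  [NormedAddCommGroup H] [InnerProductSpace ℂ H] [CompleteSpace H]
  [NormedAddCommGroup E] [InnerProductSpace ℂ E] [CompleteSpace E]

theorem cfc_natCast_smul_imaginaryPart (hg : OperatorLipschitzWith.{u} M g) {a : H →L[ℂ] H}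
    (ha : IsStarNormal a) (N : ℕ) :
    cfc g ((N : ℂ) • (ℑ a : H →L[ℂ] H)) = cfc (fun z ↦ g (N * z.im)) a := by
  have cont : ContinuousOn g ((fun z : ℂ ↦ (N * z.im : ℂ)) '' spectrum ℂ a) :=
    hg.continuousOn_range_ofReal.mono <|
      Set.image_subset_iff.mpr fun z _ ↦ ⟨N * z.im, by simp⟩
  rw [← cfc_im_id a, ← cfc_const_mul (N : ℂ) (fun z ↦ (z.im : ℂ)) a, ← cfc_comp' g _ a cont]

theorem norm_cfc_imaginaryPart_sub_cfc_pow_apply_le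
    (hf : OperatorLipschitzWith.{u} M fun z ↦ f (exp (I * z))) {S : H →L[ℂ] H}
    (hS : S ∈ unitary (H →L[ℂ] H)) (N : ℕ) (x : H) :
    ‖cfc (fun z ↦ f (exp (I * z))) ((N : ℂ) • (ℑ S : H →L[ℂ] H)) x - cfc f (S ^ N) x‖ ≤
      M * N * (2 * ‖((S - 1) ^ 2 : H →L[ℂ] H) x‖) := by
  have hS_normal : IsStarNormal S := isStarNormal_of_mem_unitary hS
  have norm_eq_one {ζ : ℂ} (hζ : ζ ∈ spectrum ℂ S) : ‖ζ‖ = 1 :=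
    spectrum.norm_eq_one_of_unitary hS hζ
  have cont_exp : ContinuousOn (fun ζ : ℂ ↦ f (exp (I * (N * ζ.im)))) (spectrum ℂ S) :=
    hf.continuousOn_range_ofReal.comp (by fun_prop) fun ζ _ ↦ ⟨N * ζ.im, by simp⟩
  have cont_pow : ContinuousOn (fun ζ : ℂ ↦ f (ζ ^ N)) (spectrum ℂ S) :=
    hf.continuousOn_sphere.comp (by fun_prop) fun ζ hζ ↦ by simp [norm_eq_one hζ]
  have cfc_pow_eq : cfc f (S ^ N) = cfc (fun ζ ↦ f (ζ ^ N)) S := by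
    refine (cfc_comp_pow f N S (hf.continuousOn_sphere.mono ?_)).symm
    exact Set.image_subset_iff.mpr fun ζ hζ ↦ by simp [norm_eq_one hζ]
  have cfc_error : cfc (fun ζ : ℂ ↦ (M * N * 2 : ℂ) * (ζ - 1) ^ 2) S =
      (M * N * 2 : ℂ) • (S - 1) ^ 2 := by
    rw [cfc_const_mul .., cfc_pow .., cfc_sub .., cfc_id' .., cfc_const_one ..]
  have hM : 0 ≤ M := hf.nonneg
  calc _ = ‖cfc (fun ζ ↦ f (exp (I * (N * ζ.im))) - f (ζ ^ N)) S x‖ := by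
        rw [hf.cfc_natCast_smul_imaginaryPart hS_normal, cfc_pow_eq, ← sub_apply, ← cfc_sub ..]
    _ ≤ ‖cfc (fun ζ : ℂ ↦ (M * N * 2 : ℂ) * (ζ - 1) ^ 2) S x‖ := by
        refine norm_cfc_apply_le_norm_cfc_apply (cont_exp.sub cont_pow) (by fun_prop)
          (fun ζ hζ ↦ ?_) x
        simpa [abs_of_nonneg hM, mul_assoc] using hf.norm_exp_im_sub_pow_le (norm_eq_one hζ) N
    _ = M * N * (2 * ‖((S - 1) ^ 2 : H →L[ℂ] H) x‖) := by
        rw [cfc_error, smul_apply, norm_smul]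
        simp [abs_of_nonneg hM, mul_assoc]

theorem norm_cfc_pow_sub_cfc_pow_apply_le
    (hf : OperatorLipschitzWith.{u} M fun z ↦ f (exp (I * z))) {S T : H →L[ℂ] H}
    (hS : S ∈ unitary (H →L[ℂ] H)) (hT : T ∈ unitary (H →L[ℂ] H)) (N : ℕ) (x : H) :
    ‖cfc f (S ^ N) x - cfc f (T ^ N) x‖ ≤ M * N * (‖S - T‖ * ‖x‖ +
      2 * (‖((S - 1) ^ 2 : H →L[ℂ] H) x‖ + ‖((T - 1) ^ 2 : H →L[ℂ] H) x‖)) := by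
  have isSelfAdjoint (R : H →L[ℂ] H) : IsSelfAdjoint ((N : ℂ) • (ℑ R : H →L[ℂ] H)) :=
    .smul (by simp [isSelfAdjoint_iff]) (ℑ R).2
  have norm_im_sub_le : ‖(N : ℂ) • (ℑ S : H →L[ℂ] H) - (N : ℂ) • (ℑ T : H →L[ℂ] H)‖ ≤
      N * ‖S - T‖ := by
    rw [← smul_sub, norm_smul, norm_natCast, ← AddSubgroup.coe_sub, ← map_sub]
    gcongr
    exact imaginaryPart.norm_le (S - T)
  have hM : 0 ≤ M := hf.nonneg
  have lipschitz := (hf H _ _ (isSelfAdjoint S) (isSelfAdjoint T)).trans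
    (mul_le_mul_of_nonneg_left norm_im_sub_le hM)
  have approx_S := hf.norm_cfc_imaginaryPart_sub_cfc_pow_apply_le hS N x
  have approx_T := hf.norm_cfc_imaginaryPart_sub_cfc_pow_apply_le hT N x
  set gS := cfc (fun z ↦ f (exp (I * z))) ((N : ℂ) • (ℑ S : H →L[ℂ] H))
  set gT := cfc (fun z ↦ f (exp (I * z))) ((N : ℂ) • (ℑ T : H →L[ℂ] H))
  calc ‖cfc f (S ^ N) x - cfc f (T ^ N) x‖
      = ‖(gS - gT) x - (gS x - cfc f (S ^ N) x) + (gT x - cfc f (T ^ N) x)‖ := by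
        rw [sub_apply]; congr 1; abel
    _ ≤ ‖(gS - gT) x‖ + ‖gS x - cfc f (S ^ N) x‖ + ‖gT x - cfc f (T ^ N) x‖ :=
        (norm_add_le _ _).trans <| by gcongr; exact _root_.norm_sub_le _ _
    _ ≤ M * (N * ‖S - T‖) * ‖x‖ + M * N * (2 * ‖((S - 1) ^ 2 : H →L[ℂ] H) x‖) +
          M * N * (2 * ‖((T - 1) ^ 2 : H →L[ℂ] H) x‖) := by
        gcongr; exact (gS - gT).le_of_opNorm_le lipschitz x
    _ = _ := by ring

theorem norm_apply_cfc_sub_cfc_le (hf : OperatorLipschitzWith.{u} M fun z ↦ f (exp (I * z)))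
    {S T : E →L[ℂ] E} (hS : S ∈ unitary (E →L[ℂ] E)) (hT : T ∈ unitary (E →L[ℂ] E))
    {U V : H →L[ℂ] H} (hU : U ∈ unitary (H →L[ℂ] H)) (hV : V ∈ unitary (H →L[ℂ] H))
    {N : ℕ} {J : H →L[ℂ] E} (hSU : (S ^ N) ∘L J = J ∘L U) (hTV : (T ^ N) ∘L J = J ∘L V) (h : H) :
    ‖J ((cfc f U - cfc f V) h)‖ ≤ M * N * (‖S - T‖ * ‖J h‖ +
      2 * (‖((S - 1) ^ 2 : E →L[ℂ] E) (J h)‖ + ‖((T - 1) ^ 2 : E →L[ℂ] E) (J h)‖)) := by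
  have cfc_SU := cfc_comp_eq_comp_cfc_of_mem_unitary (pow_mem hS N) hU hSU hf.continuousOn_sphere
  have cfc_TV := cfc_comp_eq_comp_cfc_of_mem_unitary (pow_mem hT N) hV hTV hf.continuousOn_sphere
  calc ‖J ((cfc f U - cfc f V) h)‖
      = ‖(cfc f (S ^ N) ∘L J - cfc f (T ^ N) ∘L J) h‖ := by rw [cfc_SU, cfc_TV]; simp
    _ ≤ _ := hf.norm_cfc_pow_sub_cfc_pow_apply_le hS hT N (J h)

end OperatorLipschitzWith

/-! ### Twisted shifts -/

/-- The Hilbert space `ℓ²(ZMod N, H)`. -/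
abbrev CyclicL2 (N : ℕ) (H : Type*) := PiLp 2 fun _ : ZMod N ↦ H

/-- The embedding of `H` into `ℓ²(ZMod N, H)` with profile `c`: the site `j` receives `c j • h`. -/
noncomputable def spread (H : Type*) [NormedAddCommGroup H] [InnerProductSpace ℂ H] {N : ℕ}
    (c : ZMod N → ℂ) : H →L[ℂ] CyclicL2 N H :=
  (PiLp.continuousLinearEquiv 2 ℂ fun _ : ZMod N ↦ H).symm ∘L
    ContinuousLinearMap.pi fun j ↦ c j • .id ℂ H

section spread

variable {H : Type*} [NormedAddCommGroup H] [InnerProductSpace ℂ H] {N : ℕ}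

@[simp]
theorem spread_apply (c : ZMod N → ℂ) (h : H) (j : ZMod N) : spread H c h j = c j • h := rfl

variable [NeZero N]

theorem norm_spread (c : ZMod N → ℂ) (h : H) :
    ‖spread H c h‖ = √(∑ j, ‖c j‖ ^ 2) * ‖h‖ := by
  have norm_sq : ‖spread H c h‖ ^ 2 = (∑ j, ‖c j‖ ^ 2) * ‖h‖ ^ 2 := by
    simp [PiLp.norm_sq_eq_of_L2, norm_smul, mul_pow, Finset.sum_mul]
  rw [← Real.sqrt_sq (norm_nonneg (spread H c h)), norm_sq, Real.sqrt_mul (by positivity),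
    Real.sqrt_sq (norm_nonneg h)]

theorem opNorm_le_of_norm_spread_apply_le {c : ZMod N → ℂ} (hc : c ≠ 0) {X : H →L[ℂ] H} {K : ℝ}
    (hK : 0 ≤ K) (h : ∀ x, ‖spread H c (X x)‖ ≤ K * ‖spread H c x‖) : ‖X‖ ≤ K := by
  obtain ⟨j, hj⟩ := Function.ne_iff.mp hc
  have mass_pos : 0 < √(∑ j, ‖c j‖ ^ 2) := by
    rw [Real.sqrt_pos]
    exact Finset.sum_pos' (fun _ _ ↦ by positivity)
      ⟨j, Finset.mem_univ j, pow_pos (norm_pos_iff.mpr hj) 2⟩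
  refine X.opNorm_le_bound hK fun x ↦ le_of_mul_le_mul_left ?_ mass_pos
  simpa only [norm_spread, mul_left_comm K] using h x

end spread

section twistedShift

variable {H : Type*} [NormedAddCommGroup H] [InnerProductSpace ℂ H] [CompleteSpace H]
  {N : ℕ} [NeZero N]

/-- The cyclic shift on `ℓ²(ZMod N, H)`, followed by the unitary `u j` at each site `j`. -/
noncomputable def twistedShift (u : ZMod N → unitary (H →L[ℂ] H)) :
    unitary (CyclicL2 N H →L[ℂ] CyclicL2 N H) :=
  Unitary.linearIsometryEquiv.symm <|
    (LinearIsometryEquiv.piLpCongrLeft 2 ℂ H (Equiv.subRight 1)).trans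
      (LinearIsometryEquiv.piLpCongrRight 2 fun j ↦ Unitary.linearIsometryEquiv (u j))

@[simp]
theorem twistedShift_apply (u : ZMod N → unitary (H →L[ℂ] H)) (ψ : CyclicL2 N H) (j : ZMod N) :
    (twistedShift u : CyclicL2 N H →L[ℂ] CyclicL2 N H) ψ j =
      (u j : H →L[ℂ] H) (ψ (j + 1)) := rfl

theorem norm_twistedShift_sub_le {u v : ZMod N → unitary (H →L[ℂ] H)} {δ : ℝ}
    (h : ∀ j, ‖(u j - v j : H →L[ℂ] H)‖ ≤ δ) :
    ‖(twistedShift u - twistedShift v : CyclicL2 N H →L[ℂ] CyclicL2 N H)‖ ≤ δ := by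
  have hδ : 0 ≤ δ := (norm_nonneg _).trans (h 0)
  refine ContinuousLinearMap.opNorm_le_bound _ hδ fun ψ ↦ ?_
  rw [← sq_le_sq₀ (norm_nonneg _) (by positivity), PiLp.norm_sq_eq_of_L2, mul_pow,
    PiLp.norm_sq_eq_of_L2, Finset.mul_sum,
    ← Equiv.sum_comp (Equiv.addRight (1 : ZMod N)) fun j ↦ δ ^ 2 * ‖ψ j‖ ^ 2]
  refine Finset.sum_le_sum fun j _ ↦ ?_
  rw [← mul_pow]
  gcongr
  exact (u j - v j : H →L[ℂ] H).le_of_opNorm_le (h j) _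

theorem twistedShift_pow_apply {u : ZMod N → unitary (H →L[ℂ] H)}
    {C : ℕ → unitary (H →L[ℂ] H)} (hC : ∀ i : ℕ, C (i + 1) = C i * u i) (ψ : CyclicL2 N H)
    (n i : ℕ) :
    (C i : H →L[ℂ] H) ((twistedShift u ^ n : CyclicL2 N H →L[ℂ] CyclicL2 N H) ψ i) =
      (C (i + n) : H →L[ℂ] H) (ψ (i + n : ℕ)) := by
  induction n generalizing i with
  | zero => simp
  | succ n ih =>
    have one_step (φ : CyclicL2 N H) : (C i : H →L[ℂ] H)
        ((twistedShift u : CyclicL2 N H →L[ℂ] CyclicL2 N H) φ i) =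
        (C (i + 1) : H →L[ℂ] H) (φ (i + 1 : ℕ)) := by simp [hC]
    rw [pow_succ', mul_apply_eq_comp, one_step, ih, add_assoc, add_comm 1]

theorem twistedShift_spread {u : ZMod N → unitary (H →L[ℂ] H)} {c : ZMod N → ℂ}
    (hc : ∀ j, u j = 1 ∨ c (j + 1) = 0) (h : H) :
    (twistedShift u : CyclicL2 N H →L[ℂ] CyclicL2 N H) (spread H c h) =
      spread H (fun j ↦ c (j + 1)) h := by
  ext j
  rcases hc j with hj | hj <;> simp [hj]

theorem twistedShift_sub_one_sq_spread {u : ZMod N → unitary (H →L[ℂ] H)} {c : ZMod N → ℂ}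
    (hc₁ : ∀ j, u j = 1 ∨ c (j + 1) = 0) (hc₂ : ∀ j, u j = 1 ∨ c (j + 2) = 0) (h : H) :
    ((twistedShift u - 1) ^ 2 : CyclicL2 N H →L[ℂ] CyclicL2 N H) (spread H c h) =
      spread H (fun j ↦ c (j + 2) - 2 * c (j + 1) + c j) h := by
  simp only [← one_add_one_eq_two, ← add_assoc] at hc₂
  have shift_twice := twistedShift_spread (c := fun j ↦ c (j + 1)) hc₂ h
  rw [sq, mul_apply_eq_comp, sub_apply, sub_apply]
  simp only [map_sub, one_apply_eq_self, twistedShift_spread hc₁, shift_twice]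
  ext j
  simp only [PiLp.sub_apply, spread_apply, ← sub_smul]
  congr 1
  rw [add_assoc, one_add_one_eq_two]
  ring

end twistedShift

section ramp

variable {H : Type*} [NormedAddCommGroup H] [InnerProductSpace ℂ H] [CompleteSpace H]
  {N : ℕ}

/-- The twists `1, …, 1, r, …, r, r * U`, where the first `m` sites are left untwisted. The shift
with these twists is an `N`-th root of `r ^ (N - m) * U` on profiles supported on the sites up to
`m`. -/
noncomputable def rampTwist (N : ℕ) (U r : unitary (H →L[ℂ] H)) (m : ℕ) (j : ZMod N) :
    unitary (H →L[ℂ] H) :=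
  (if m ≤ j.val then r else 1) * (if j.val + 1 = N then U else 1)

/-- The product of the first `i` of the twists `rampTwist`, continued periodically. Truncation makes
the last exponent zero on the untwisted sites. -/
noncomputable def rampHolonomy (N : ℕ) (U r : unitary (H →L[ℂ] H)) (m i : ℕ) :
    unitary (H →L[ℂ] H) :=
  (r ^ (N - m) * U) ^ (i / N) * r ^ (i % N - m)

variable (U r : unitary (H →L[ℂ] H)) {m : ℕ}

theorem norm_rampTwist_sub_le (m : ℕ) (j : ZMod N) :
    ‖(rampTwist N U 1 m j - rampTwist N U r m j : H →L[ℂ] H)‖ ≤ ‖(r - 1 : H →L[ℂ] H)‖ := by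
  rw [rampTwist, rampTwist, ite_self, Submonoid.coe_mul, Submonoid.coe_mul, ← sub_mul,
    CStarRing.norm_mul_coe_unitary, norm_sub_rev]
  split_ifs <;> simp

theorem rampTwist_eq_one {j : ZMod N} (hm : m < N) (hj : j.val < m) : rampTwist N U r m j = 1 := by
  rw [rampTwist, if_neg (by omega), if_neg (by omega), one_mul]

variable [NeZero N]

theorem rampHolonomy_succ (m i : ℕ) :
    rampHolonomy N U r m (i + 1) = rampHolonomy N U r m i * rampTwist N U r m i := by
  have hN : 0 < N := NeZero.pos N
  obtain ⟨q, s, hs, rfl⟩ : ∃ q s, s < N ∧ i = s + N * q :=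
    ⟨i / N, i % N, Nat.mod_lt i hN, (Nat.mod_add_div i N).symm⟩
  have div_eq {a b : ℕ} (ha : a < N) : (a + N * b) / N = b := by
    rw [Nat.add_mul_div_left _ _ hN, Nat.div_eq_of_lt ha, zero_add]
  have mod_eq {a b : ℕ} (ha : a < N) : (a + N * b) % N = a := by
    rw [Nat.add_mul_mod_self_left, Nat.mod_eq_of_lt ha]
  simp only [rampHolonomy, rampTwist, ZMod.val_natCast, mod_eq hs, div_eq hs, mul_assoc]
  rcases (show s + 1 ≤ N from hs).lt_or_eq with hs' | hs'
  · rw [add_right_comm, div_eq hs', mod_eq hs', if_neg hs'.ne, mul_one]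
    congr 1
    split_ifs with hm
    · rw [← pow_succ, Nat.sub_add_comm hm]
    · rw [mul_one, Nat.sub_eq_zero_of_le (by omega), Nat.sub_eq_zero_of_le (by omega)]
  · have succ_eq : s + N * q + 1 = 0 + N * (q + 1) := by rw [mul_add]; omega
    rw [succ_eq, div_eq hN, mod_eq hN, if_pos hs', pow_succ, zero_tsub, pow_zero, mul_one]
    congr 1
    rw [← mul_assoc]
    congr 1
    split_ifs with hm
    · rw [← pow_succ, ← Nat.sub_add_comm hm, ← hs']
    · rw [mul_one, Nat.sub_eq_zero_of_le (by omega), Nat.sub_eq_zero_of_le (by omega)]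

theorem twistedShift_rampTwist_pow_comp_spread {c : ZMod N → ℂ} (hc : ∀ j, m < j.val → c j = 0) :
    ((twistedShift (rampTwist N U r m) : CyclicL2 N H →L[ℂ] CyclicL2 N H) ^ N) ∘L spread H c =
      spread H c ∘L (r ^ (N - m) * U : unitary (H →L[ℂ] H)) := by
  ext h j
  have holonomy := twistedShift_pow_apply (C := rampHolonomy N U r m) (rampHolonomy_succ U r m)
    (spread H c h) N j.val
  rw [Nat.cast_add, ZMod.natCast_self, add_zero, ZMod.natCast_zmod_val, spread_apply] at holonomy
  rcases lt_or_ge m j.val with hj | hj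
  · rw [hc j hj, zero_smul, map_zero, ← norm_eq_zero, Unitary.norm_map, norm_eq_zero] at holonomy
    simpa [hc j hj] using holonomy
  · have start : rampHolonomy N U r m j.val = 1 := by
      simp [rampHolonomy, Nat.div_eq_of_lt j.val_lt, Nat.mod_eq_of_lt j.val_lt, hj]
    have around : rampHolonomy N U r m (j.val + N) = r ^ (N - m) * U := by
      simp [rampHolonomy, Nat.div_eq_of_lt j.val_lt, Nat.mod_eq_of_lt j.val_lt, hj, NeZero.pos N]
    simpa [start, around] using holonomy

end ramp

/-! ### Tent profiles -/

section tent

/-- The second difference of a sequence; `(S - 1) ^ 2` acts on profiles by it. -/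
def secondDiff (t : ℕ → ℤ) (n : ℕ) : ℤ := t (n + 2) - 2 * t (n + 1) + t n

/-- The tent of height `2 * q` on `[1, 4 * q + 1]`, the slowly varying profile of the proof. It is
integer-valued, so that its second difference is found by linear arithmetic. -/
def tent (q n : ℕ) : ℤ := max 0 (min (n - 1) (4 * q + 1 - n))

theorem support_tent_subset (q : ℕ) : Function.support (tent q) ⊆ Set.Icc 2 (4 * q) := by
  intro n hn
  simp only [tent, Function.mem_support] at hn
  simp only [Set.mem_Icc]
  omega

theorem support_secondDiff_tent_subset (q : ℕ) :
    Function.support (secondDiff (tent q)) ⊆ ({0, 2 * q, 4 * q} : Finset ℕ) := by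
  intro n hn
  simp only [secondDiff, tent, Function.mem_support] at hn
  simp only [Finset.mem_coe, Finset.mem_insert, Finset.mem_singleton]
  omega

theorem abs_secondDiff_tent_le (q n : ℕ) : |secondDiff (tent q) n| ≤ 2 := by
  simp only [secondDiff, tent, abs_le]
  omega

theorem sum_secondDiff_tent_sq_le (q N : ℕ) :
    ∑ n ∈ Finset.range N, secondDiff (tent q) n ^ 2 ≤ 12 := by
  set kinks : Finset ℕ := {0, 2 * q, 4 * q}
  have eq_zero_of_notMem {n : ℕ} (hn : n ∉ kinks) : secondDiff (tent q) n ^ 2 = 0 := by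
    rw [Function.notMem_support.mp fun h ↦ hn (support_secondDiff_tent_subset q h), sq, zero_mul]
  have card_kinks : (kinks.card : ℤ) ≤ 3 := mod_cast Finset.card_le_three
  calc ∑ n ∈ Finset.range N, secondDiff (tent q) n ^ 2
      = ∑ n ∈ Finset.range N ∩ kinks, secondDiff (tent q) n ^ 2 :=
        (Finset.sum_subset Finset.inter_subset_left fun n hN hn ↦
          eq_zero_of_notMem fun hk ↦ hn (Finset.mem_inter.mpr ⟨hN, hk⟩)).symm
    _ ≤ ∑ n ∈ kinks, secondDiff (tent q) n ^ 2 :=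
        Finset.sum_le_sum_of_subset_of_nonneg Finset.inter_subset_right fun _ _ _ ↦ sq_nonneg _
    _ ≤ kinks.card • 2 ^ 2 :=
        Finset.sum_le_card_nsmul _ _ _ fun n _ ↦
          sq_le_sq.mpr <| (abs_secondDiff_tent_le q n).trans (le_abs_self 2)
    _ ≤ 12 := by rw [nsmul_eq_mul]; linarith

theorem two_mul_cube_le_sum_tent_sq {q N : ℕ} (hN : 4 * q < N) :
    2 * (q : ℤ) ^ 3 ≤ ∑ n ∈ Finset.range N, tent q n ^ 2 := by
  have middle_subset : Finset.Icc (q + 1) (3 * q) ⊆ Finset.range N := fun n hn ↦ by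
    rw [Finset.mem_Icc] at hn
    rw [Finset.mem_range]
    omega
  have card_middle : (Finset.Icc (q + 1) (3 * q)).card = 2 * q := by rw [Nat.card_Icc]; omega
  have le_tent {n : ℕ} (hn : n ∈ Finset.Icc (q + 1) (3 * q)) : (q : ℤ) ≤ tent q n := by
    rw [Finset.mem_Icc] at hn
    simp only [tent]
    omega
  calc 2 * (q : ℤ) ^ 3 = (Finset.Icc (q + 1) (3 * q)).card • (q : ℤ) ^ 2 := by
        rw [card_middle, nsmul_eq_mul]; push_cast; ring
    _ ≤ ∑ n ∈ Finset.Icc (q + 1) (3 * q), tent q n ^ 2 :=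
        Finset.card_nsmul_le_sum _ _ _ fun n hn ↦ by gcongr; exact le_tent hn
    _ ≤ ∑ n ∈ Finset.range N, tent q n ^ 2 :=
        Finset.sum_le_sum_of_subset_of_nonneg middle_subset fun _ _ _ ↦ sq_nonneg _

variable {N : ℕ} [NeZero N]

theorem sum_zmod_val {M : Type*} [AddCommMonoid M] (F : ℕ → M) :
    ∑ j : ZMod N, F j.val = ∑ n ∈ Finset.range N, F n := by
  obtain ⟨n, rfl⟩ := Nat.exists_eq_succ_of_ne_zero (NeZero.ne N)
  exact Fin.sum_univ_eq_sum_range F (n + 1)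

theorem sum_zmod_norm_intCast_sq (t : ℕ → ℤ) :
    ∑ j : ZMod N, ‖(t j.val : ℂ)‖ ^ 2 = (∑ n ∈ Finset.range N, t n ^ 2 : ℤ) := by
  rw [sum_zmod_val fun n ↦ ‖(t n : ℂ)‖ ^ 2]
  simp

theorem norm_spread_secondDiff_tent_le {H : Type*} [NormedAddCommGroup H] [InnerProductSpace ℂ H]
    {q : ℕ} (hq : 0 < q) (hN : 4 * q < N) (h : H) :
    ‖spread H (fun j : ZMod N ↦ (secondDiff (tent q) j.val : ℂ)) h‖ ≤
      √(6 / q ^ 3) * ‖spread H (fun j : ZMod N ↦ (tent q j.val : ℂ)) h‖ := by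
  rw [norm_spread, norm_spread, ← mul_assoc, ← Real.sqrt_mul (by positivity),
    sum_zmod_norm_intCast_sq, sum_zmod_norm_intCast_sq]
  gcongr
  calc ((∑ n ∈ Finset.range N, secondDiff (tent q) n ^ 2 : ℤ) : ℝ) ≤ 12 :=
        mod_cast sum_secondDiff_tent_sq_le q N
    _ = 6 / q ^ 3 * (2 * q ^ 3) := by field_simp; norm_num
    _ ≤ 6 / q ^ 3 * (∑ n ∈ Finset.range N, tent q n ^ 2 : ℤ) := by
        gcongr
        exact_mod_cast two_mul_cube_le_sum_tent_sq hN

theorem apply_val_add_eq {t : ℕ → ℤ} {m : ℕ} (ht : Function.support t ⊆ Set.Icc 2 m) (hm : m < N)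
    (j : ZMod N) {a : ℕ} (ha : a ≤ 2) : t (j + a).val = t (j.val + a) := by
  have eq_zero {n : ℕ} (hn : n < 2 ∨ m < n) : t n = 0 :=
    Function.notMem_support.mp fun h ↦ by have := ht h; rw [Set.mem_Icc] at this; omega
  have val_eq : (j + a).val = (j.val + a) % N := by
    rw [← ZMod.val_natCast, Nat.cast_add, ZMod.natCast_zmod_val]
  have := j.val_lt
  rcases lt_or_ge (j.val + a) N with hlt | hge
  · rw [val_eq, Nat.mod_eq_of_lt hlt]
  · have wrapped : (j.val + a) % N < 2 := by
      have := Nat.mod_le (j.val + a - N) N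
      rw [Nat.mod_eq_sub_mod hge]
      omega
    rw [val_eq, eq_zero (.inl wrapped), eq_zero (.inr (by omega))]

theorem twistedShift_rampTwist_sub_one_sq_spread {H : Type*} [NormedAddCommGroup H]
    [InnerProductSpace ℂ H] [CompleteSpace H] (U r : unitary (H →L[ℂ] H)) {t : ℕ → ℤ} {m : ℕ}
    (ht : Function.support t ⊆ Set.Icc 2 m) (hm : m < N) (h : H) :
    ((twistedShift (rampTwist N U r m) - 1) ^ 2 : CyclicL2 N H →L[ℂ] CyclicL2 N H)
      (spread H (fun j ↦ (t j.val : ℂ)) h) = spread H (fun j ↦ (secondDiff t j.val : ℂ)) h := by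
  have val_add_one (j : ZMod N) : t (j + 1).val = t (j.val + 1) := by
    simpa using apply_val_add_eq ht hm j one_le_two
  have val_add_two (j : ZMod N) : t (j + 2).val = t (j.val + 2) := by
    simpa using apply_val_add_eq ht hm j le_rfl
  have twist_or_zero (j : ZMod N) {a : ℕ} (ha : 0 < a) :
      rampTwist N U r m j = 1 ∨ t (j.val + a) = 0 := by
    refine (lt_or_ge j.val m).imp (rampTwist_eq_one U r hm) fun hj ↦ ?_
    exact Function.notMem_support.mp fun hsupp ↦ by have := (ht hsupp).2; omega
  rw [twistedShift_sub_one_sq_spread]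
  · simp only [val_add_one, val_add_two, secondDiff]
    push_cast
    rfl
  · simpa [val_add_one] using fun j ↦ twist_or_zero j one_pos
  · simpa [val_add_two] using fun j ↦ twist_or_zero j two_pos
end tent

/-! ### Unitaries near the identity -/

section cstar

variable {A : Type*} [CStarAlgebra A]

theorem norm_expUnitary_sub_one_le (x : selfAdjoint A) :
    ‖(selfAdjoint.expUnitary x - 1 : A)‖ ≤ ‖x‖ := by
  nontriviality A
  rcases le_total ‖x‖ Real.pi with hx | hx
  · rw [← sq_le_sq₀ (norm_nonneg _) (norm_nonneg _), selfAdjoint.norm_sq_expUnitary_sub_one hx]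
    linarith [Real.one_sub_sq_div_two_le_cos (x := ‖x‖)]
  · calc ‖(selfAdjoint.expUnitary x - 1 : A)‖ ≤ ‖(selfAdjoint.expUnitary x : A)‖ + ‖(1 : A)‖ :=
          norm_sub_le _ _
      _ = 2 := by rw [CStarRing.norm_coe_unitary, CStarRing.norm_one, one_add_one_eq_two]
      _ ≤ ‖x‖ := Real.two_le_pi.trans hx

theorem expUnitary_nsmul (x : selfAdjoint A) (k : ℕ) :
    selfAdjoint.expUnitary (k • x) = selfAdjoint.expUnitary x ^ k := by
  induction k with
  | zero => simp
  | succ k ih =>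
    have commute : Commute ((k • x : selfAdjoint A) : A) x := by
      rw [AddSubgroup.coe_nsmul]
      exact (Commute.refl _).smul_left k
    rw [succ_nsmul, commute.expUnitary_add, ih, pow_succ]

theorem exists_unitary_pow_eq_expUnitary (x : selfAdjoint A) {k : ℕ} (hk : k ≠ 0) :
    ∃ r : unitary A, r ^ k = selfAdjoint.expUnitary x ∧ ‖(r - 1 : A)‖ ≤ ‖x‖ / k := by
  refine ⟨selfAdjoint.expUnitary ((k : ℝ)⁻¹ • x), ?_, ?_⟩
  · rw [← expUnitary_nsmul, ← Nat.cast_smul_eq_nsmul ℝ, smul_inv_smul₀ (Nat.cast_ne_zero.mpr hk)]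
  · refine (norm_expUnitary_sub_one_le _).trans_eq ?_
    rw [norm_smul, norm_inv, Real.norm_natCast, div_eq_inv_mul]

theorem norm_argSelfAdjoint_le (u : unitary A) :
    ‖Unitary.argSelfAdjoint u‖ ≤ Real.pi / 2 * ‖(u - 1 : A)‖ := by
  nontriviality A
  refine norm_cfc_le (by positivity) fun z hz ↦ ?_
  have norm_z : ‖z‖ = 1 := spectrum.norm_eq_one_of_unitary u.2 hz
  have sub_one_mem : z - 1 ∈ spectrum ℂ (u - 1 : A) := by
    rw [← map_one (algebraMap ℂ A), ← spectrum.sub_singleton_eq]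
    exact Set.sub_mem_sub hz rfl
  calc ‖(z.arg : ℂ)‖ = InnerProductGeometry.angle z 1 := by
        rw [norm_real, Real.norm_eq_abs, angle_one_right (norm_ne_zero_iff.mp (by simp [norm_z]))]
    _ ≤ Real.pi / 2 * ‖z - 1‖ := angle_le_mul_norm_sub norm_z norm_one
    _ ≤ Real.pi / 2 * ‖(u - 1 : A)‖ := by
        gcongr
        exact spectrum.norm_le_norm_of_mem sub_one_mem

end cstar

namespace OperatorLipschitzWith

variable {M : ℝ} {f : ℂ → ℂ} {H : Type u} [NormedAddCommGroup H] [InnerProductSpace ℂ H]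
  [CompleteSpace H]

theorem norm_cfc_sub_cfc_pow_mul_le (hf : OperatorLipschitzWith.{u} M fun z ↦ f (exp (I * z)))
    (U r : unitary (H →L[ℂ] H)) {q N : ℕ} (hq : 0 < q) (hN : 4 * q < N) :
    ‖cfc f (U : H →L[ℂ] H) - cfc f ((r ^ (N - 4 * q) * U : unitary _) : H →L[ℂ] H)‖ ≤
      M * N * (‖(r - 1 : H →L[ℂ] H)‖ + 4 * √(6 / q ^ 3)) := by
  have : NeZero N := ⟨by omega⟩
  have hM : 0 ≤ M := hf.nonneg
  set J := spread H fun j : ZMod N ↦ (tent q j.val : ℂ)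
  set S : unitary (H →L[ℂ] H) → unitary (CyclicL2 N H →L[ℂ] CyclicL2 N H) :=
    fun s ↦ twistedShift (rampTwist N U s (4 * q))
  have tent_eq_zero (j : ZMod N) (hj : 4 * q < j.val) : (tent q j.val : ℂ) = 0 := by
    rw [Function.notMem_support.mp fun h ↦ (support_tent_subset q h).2.not_gt hj, Int.cast_zero]
  have root (s : unitary (H →L[ℂ] H)) :
      ((S s : CyclicL2 N H →L[ℂ] CyclicL2 N H) ^ N) ∘L J =
        J ∘L (s ^ (N - 4 * q) * U : unitary (H →L[ℂ] H)) :=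
    twistedShift_rampTwist_pow_comp_spread U s tent_eq_zero
  have almost_fixed (s : unitary (H →L[ℂ] H)) (h : H) :
      ‖((S s - 1) ^ 2 : CyclicL2 N H →L[ℂ] CyclicL2 N H) (J h)‖ ≤ √(6 / q ^ 3) * ‖J h‖ := by
    rw [twistedShift_rampTwist_sub_one_sq_spread U s (support_tent_subset q) hN]
    exact norm_spread_secondDiff_tent_le hq hN h
  have close : ‖(S 1 - S r : CyclicL2 N H →L[ℂ] CyclicL2 N H)‖ ≤ ‖(r - 1 : H →L[ℂ] H)‖ :=
    norm_twistedShift_sub_le (norm_rampTwist_sub_le U r _)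
  have profile_ne_zero : (fun j : ZMod N ↦ (tent q j.val : ℂ)) ≠ 0 := by
    have val_two : ((2 : ℕ) : ZMod N).val = 2 := ZMod.val_cast_of_lt (by omega)
    have tent_two : tent q 2 = 1 := by simp only [tent]; omega
    exact Function.ne_iff.mpr ⟨(2 : ℕ), by rw [val_two, tent_two]; simp⟩
  refine opNorm_le_of_norm_spread_apply_le profile_ne_zero (by positivity) fun h ↦ ?_
  calc _ ≤ M * N * (‖(S 1 - S r : CyclicL2 N H →L[ℂ] CyclicL2 N H)‖ * ‖J h‖ +
          2 * (‖((S 1 - 1) ^ 2 : CyclicL2 N H →L[ℂ] CyclicL2 N H) (J h)‖ +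
            ‖((S r - 1) ^ 2 : CyclicL2 N H →L[ℂ] CyclicL2 N H) (J h)‖)) :=
        hf.norm_apply_cfc_sub_cfc_le (S 1).2 (S r).2 U.2 (Subtype.prop _)
          (by simpa using root 1) (root r) h
    _ ≤ M * N * (‖(r - 1 : H →L[ℂ] H)‖ * ‖J h‖ +
          2 * (√(6 / q ^ 3) * ‖J h‖ + √(6 / q ^ 3) * ‖J h‖)) := by
        gcongr
        exacts [almost_fixed 1 h, almost_fixed r h]
    _ = _ := by ring

theorem norm_cfc_sub_cfc_expUnitary_mul_le
    (hf : OperatorLipschitzWith.{u} M fun z ↦ f (exp (I * z)))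
    (U : unitary (H →L[ℂ] H)) (D : selfAdjoint (H →L[ℂ] H)) :
    ‖cfc f (U : H →L[ℂ] H) -
        cfc f ((selfAdjoint.expUnitary D * U : unitary _) : H →L[ℂ] H)‖ ≤ M * ‖D‖ := by
  have discrete {t : ℕ} (ht : 0 < t) : ‖cfc f (U : H →L[ℂ] H) -
        cfc f ((selfAdjoint.expUnitary D * U : unitary _) : H →L[ℂ] H)‖ ≤
      M * (4 / t + 1) * (‖D‖ + 4 * √6 / t) := by
    obtain ⟨r, r_pow, norm_r_sub_one_le⟩ := exists_unitary_pow_eq_expUnitary D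
      (pow_ne_zero 5 ht.ne')
    -- For `q = t ^ 4` and `N = 4 * q + t ^ 5`, both `N / t ^ 5 → 1` and `N * √(6 / q ^ 3) → 0`.
    have sqrt_eq : √(6 / (t ^ 4 : ℕ) ^ 3) = √6 / t ^ 6 := by
      rw [Real.sqrt_div' _ (by positivity), Nat.cast_pow, ← pow_mul, pow_mul _ 6 2,
        Real.sqrt_sq (by positivity)]
    have hM : 0 ≤ M := hf.nonneg
    have key := hf.norm_cfc_sub_cfc_pow_mul_le U r (q := t ^ 4) (N := 4 * t ^ 4 + t ^ 5)
      (by positivity) (lt_add_of_pos_right _ (by positivity))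
    rw [add_tsub_cancel_left, r_pow, sqrt_eq] at key
    calc _ ≤ _ := key
      _ ≤ M * (4 * t ^ 4 + t ^ 5 : ℕ) * (‖D‖ / (t ^ 5 : ℕ) + 4 * (√6 / t ^ 6)) := by gcongr
      _ = M * (4 / t + 1) * (‖D‖ + 4 * √6 / t) := by push_cast; field_simp
  have bound_tendsto : Tendsto (fun t : ℕ ↦ M * (4 / t + 1) * (‖D‖ + 4 * √6 / t)) atTop
      (𝓝 (M * (0 + 1) * (‖D‖ + 0))) :=
    (((tendsto_const_div_atTop_nhds_zero_nat 4).add_const 1).const_mul M).mul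
      ((tendsto_const_div_atTop_nhds_zero_nat (4 * √6)).const_add ‖D‖)
  rw [zero_add, mul_one, add_zero] at bound_tendsto
  exact ge_of_tendsto bound_tendsto <| eventually_gt_atTop 0 |>.mono fun _ ↦ discrete

theorem norm_cfc_sub_cfc_le_of_norm_sub_lt_two
    (hf : OperatorLipschitzWith.{u} M fun z ↦ f (exp (I * z)))
    (U V : unitary (H →L[ℂ] H)) (hUV : ‖(U - V : H →L[ℂ] H)‖ < 2) :
    ‖cfc f (U : H →L[ℂ] H) - cfc f (V : H →L[ℂ] H)‖ ≤
      M * (Real.pi / 2 * ‖(U - V : H →L[ℂ] H)‖) := by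
  have hM : 0 ≤ M := hf.nonneg
  have key := hf.norm_cfc_sub_cfc_expUnitary_mul_le V (Unitary.argSelfAdjoint (U * star V))
  rw [Unitary.expUnitary_eq_mul_inv U V hUV, mul_assoc, Unitary.star_mul_self, mul_one,
    norm_sub_rev] at key
  refine key.trans ?_
  gcongr
  rw [Unitary.norm_sub_eq]
  exact norm_argSelfAdjoint_le _

theorem norm_cfc_sub_algebraMap_le (hf : OperatorLipschitzWith.{u} M fun z ↦ f (exp (I * z)))
    {U : H →L[ℂ] H} (hU : U ∈ unitary (H →L[ℂ] H)) :
    ‖cfc f U - algebraMap ℂ (H →L[ℂ] H) (f 1)‖ ≤ M * Real.pi := by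
  have hM : 0 ≤ M := hf.nonneg
  have norm_eq_one {z : ℂ} (hz : z ∈ spectrum ℂ U) : ‖z‖ = 1 :=
    spectrum.norm_eq_one_of_unitary hU hz
  have cont : ContinuousOn f (spectrum ℂ U) :=
    hf.continuousOn_sphere.mono fun z hz ↦ mem_sphere_zero_iff_norm.mpr (norm_eq_one hz)
  have : IsStarNormal U := isStarNormal_of_mem_unitary hU
  rw [← cfc_const (f 1) U, ← cfc_sub f (fun _ ↦ f 1) U cont]
  refine norm_cfc_le (by positivity) fun z hz ↦ ?_
  refine (hf.norm_sub_le_angle (norm_eq_one hz) norm_one).trans ?_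
  gcongr
  exact InnerProductGeometry.angle_le_pi z 1

end OperatorLipschitzWith

theorem stmt_19_general {M : ℝ} {f : ℂ → ℂ}
    (hf : OperatorLipschitzWith.{u} M fun z ↦ f (exp (I * z)))
    {H : Type u} [NormedAddCommGroup H] [InnerProductSpace ℂ H] [CompleteSpace H]
    {U V : H →L[ℂ] H} (hU : U ∈ unitary (H →L[ℂ] H)) (hV : V ∈ unitary (H →L[ℂ] H)) :
    ‖cfc f U - cfc f V‖ ≤ Real.pi * M * ‖U - V‖ := by
  have hM : 0 ≤ M := hf.nonneg
  rcases lt_or_ge ‖U - V‖ 2 with hUV | hUV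
  · calc ‖cfc f U - cfc f V‖ ≤ M * (Real.pi / 2 * ‖U - V‖) :=
          hf.norm_cfc_sub_cfc_le_of_norm_sub_lt_two ⟨U, hU⟩ ⟨V, hV⟩ hUV
      _ = Real.pi / 2 * M * ‖U - V‖ := by ring
      _ ≤ Real.pi * M * ‖U - V‖ := by gcongr; exact half_le_self Real.pi_pos.le
  · calc ‖cfc f U - cfc f V‖ ≤ ‖cfc f U - algebraMap ℂ (H →L[ℂ] H) (f 1)‖ +
            ‖cfc f V - algebraMap ℂ (H →L[ℂ] H) (f 1)‖ := by
          rw [← sub_sub_sub_cancel_right]; exact norm_sub_le _ _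
      _ ≤ M * Real.pi + M * Real.pi :=
          add_le_add (hf.norm_cfc_sub_algebraMap_le hU) (hf.norm_cfc_sub_algebraMap_le hV)
      _ = Real.pi * M * 2 := by ring
      _ ≤ Real.pi * M * ‖U - V‖ := by gcongr

/-- Transfer of operator Lipschitzness from the line to the circle: let
`f : ℂ → ℂ` be continuous and `g(z) = f (exp (i z))`. If
`‖g(A) - g(B)‖ ≤ M * ‖A - B‖` for all bounded self-adjoint operators `A`, `B`
on any complex Hilbert space (i.e. `x ↦ f (e^{ix})` is operator Lipschitz on
`ℝ` with constant `M`), then `‖f(U) - f(V)‖ ≤ (3√2 π / 2) * M * ‖U - V‖` for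
all unitary operators `U`, `V` on any complex Hilbert space. -/
theorem stmt_19 (f : ℂ → ℂ) (hf : Continuous f) (M : ℝ) (hM : 0 ≤ M)
    (hlip : ∀ (H : Type) [NormedAddCommGroup H] [InnerProductSpace ℂ H] [CompleteSpace H]
      (A B : H →L[ℂ] H), IsSelfAdjoint A → IsSelfAdjoint B →
      ‖cfc (fun z : ℂ => f (Complex.exp (Complex.I * z))) A -
          cfc (fun z : ℂ => f (Complex.exp (Complex.I * z))) B‖ ≤ M * ‖A - B‖) :
    ∀ (H : Type) [NormedAddCommGroup H] [InnerProductSpace ℂ H] [CompleteSpace H]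
      (U V : H →L[ℂ] H), U ∈ unitary (H →L[ℂ] H) → V ∈ unitary (H →L[ℂ] H) →
      ‖cfc f U - cfc f V‖ ≤ (3 * Real.sqrt 2 * Real.pi / 2) * M * ‖U - V‖ := by
  intro H _ _ _ U V hU hV
  refine (stmt_19_general hlip hU hV).trans ?_
  gcongr
  nlinarith [Real.one_le_sqrt.mpr one_le_two, Real.pi_pos]
end
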